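/- arXiv:cs/0508037 — 2 statements merged into one kernel-verified Lean document; each statement's English description precedes it below -/
import Mathlib

section
/- Let r ≤ 0.546 be a fixed real number. For each n, let φ_n be a random EC3 formula on n variables with m = ⌊rn⌋ clauses, each clause chosen independently and uniformly with replacement from the C(n,3) possible 3-element clauses. Then there exists δ > 0 such that for all sufficiently large n, Pr[φ_n is satisfiable] ≥ δ (i.e., the satisfiability probability is bounded away from 0). -/
/-!
The proof is a second moment argument restricted to balanced assignments.

Suppose first that `n = 3k`, and let `X` be the number of satisfying assignments with exactly `k`
true variables. By Cauchy–Schwarz (`second_moment`), `P(X > 0) ≥ E[X]² / E[X²]`. Fixing the first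
assignment of a pair, the number `A` of common true variables is hypergeometric with weight
`hypWeight k A`, and a random clause is satisfied by both assignments with probability at most
`corr (A / k) (1 + 1/k)²` times the square of the probability for one (`pairCount_ratio_le`). Hence
`E[X²] / E[X]²` is at most a constant times `∑_A hypWeight k A * corr (A / k) ^ m`.

With a third of the variables true, `corr x - 1` vanishes to second order at the typical overlap
`x = 1/3`, so the two factors peak at the same point. The key inequality `rate_le` states that for
`m ≤ (41/25) k`, a density `41/75 > 0.546`, the exponential rate of the summand is at most
`-(x - 1/3)² / 1000` on all of `[0, 1]`. Together with Stirling's bounds for the factorials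
(`hypWeight_le`), each summand is dominated by a Cauchy kernel of width `√k` around `k/3`, whose
sum over `A` is bounded by telescoping an arctangent (`sum_hypWeight_le`).

For general `n` put `k = ⌊n/3⌋`. All `m` clauses avoid the at most two extra variables with
probability at least `exp (-6)`, and the small slack between `0.546` and `41/75` absorbs the
rounding of `n` to a multiple of three.
-/

open Filter Topology

/-- A clause of an EC3 (Positive 1-in-3 SAT) formula on `n` variables:
a 3-element subset of the variables. -/
def EC3Clause (n : ℕ) := {c : Finset (Fin n) // c.card = 3}

/-- An assignment satisfies a clause if exactly one of its variables is true. -/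
def ClauseSat {n : ℕ} (σ : Fin n → Bool) (c : Finset (Fin n)) : Prop :=
  (c.filter fun v => σ v = true).card = 1

/-- A formula (a length-`m` tuple of clauses, i.e. a multiset of clauses with
multiplicity recorded by indices) is satisfiable if some assignment satisfies
every clause. -/
def FormulaSatisfiable {n m : ℕ} (φ : Fin m → EC3Clause n) : Prop :=
  ∃ σ : Fin n → Bool, ∀ i : Fin m, ClauseSat σ (φ i).1

/-- The probability that a random EC3 formula on `n` variables with `m` clauses,
each chosen independently and uniformly with replacement among the `C(n,3)`
possible clauses, is satisfiable. -/
noncomputable def Psat (n m : ℕ) : ℝ :=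
  (Nat.card {φ : Fin m → EC3Clause n // FormulaSatisfiable φ} : ℝ) /
    (Nat.card (Fin m → EC3Clause n) : ℝ)

/-! ### The rate function of the second moment -/

/-- Exponential rate of the hypergeometric weight
`C(k, xk) C(2k, (1-x)k) / C(3k, k)`, which vanishes at `x = 1/3`. -/
noncomputable def entRate (x : ℝ) : ℝ :=
  -(x * Real.log x) - 2 * ((1 - x) * Real.log (1 - x)) - (1 + x) * Real.log (1 + x)
    + 4 * Real.log 2 - 3 * Real.log 3

/-- Limiting ratio `P(σ, τ both satisfy a clause) / P(σ satisfies a clause)²` for two assignments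
with a third of the variables true, when a fraction `x` of the true variables is common. -/
noncomputable def corr (x : ℝ) : ℝ := 9 / 16 * (2 - x + 3 * x ^ 3)

lemma corr_eq (x : ℝ) : corr x = 1 + 27 / 16 * ((x - 1 / 3) ^ 2 * (x + 2 / 3)) := by
  unfold corr; ring

lemma one_le_corr {x : ℝ} (hx : 0 ≤ x) : 1 ≤ corr x := by
  rw [corr_eq]
  have : 0 ≤ (x - 1 / 3) ^ 2 * (x + 2 / 3) := by positivity
  linarith

lemma hasDerivAt_ent {x : ℝ} (h0 : 0 < x) (h1 : x < 1) :
    HasDerivAt (fun x : ℝ =>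
      x * Real.log x + 2 * ((1 - x) * Real.log (1 - x)) + (1 + x) * Real.log (1 + x)
        - 13 / 4 * x ^ 2)
      (Real.log x - 2 * Real.log (1 - x) + Real.log (1 + x) - 13 / 2 * x) x := by
  have e1 := Real.hasDerivAt_mul_log h0.ne'
  have e2 : HasDerivAt (fun x => (1 - x) * Real.log (1 - x)) ((Real.log (1 - x) + 1) * -1) x :=
    (Real.hasDerivAt_mul_log (x := 1 - x) (by linarith)).comp x
      ((hasDerivAt_id x).const_sub 1)
  have e3 : HasDerivAt (fun x => (1 + x) * Real.log (1 + x)) ((Real.log (1 + x) + 1) * 1) x :=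
    (Real.hasDerivAt_mul_log (x := 1 + x) (by linarith)).comp x
      ((hasDerivAt_id x).const_add 1)
  have e4 : HasDerivAt (fun x : ℝ => 13 / 4 * x ^ 2) (13 / 2 * x) x :=
    ((hasDerivAt_pow 2 x).const_mul (13 / 4 : ℝ)).congr_deriv (by norm_num; ring)
  exact (((e1.add (e2.const_mul 2)).add e3).sub e4).congr_deriv (by ring)

/-- `entRate` has second derivative `-(1 + 3x) / (x (1 - x²)) ≤ -13/2` on `(0, 1)`; stated as
convexity of `-entRate - 13/4 x²` up to constants. -/
lemma entRate_strong_concave :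
    ConvexOn ℝ (Set.Icc (0 : ℝ) 1) (fun x : ℝ =>
      x * Real.log x + 2 * ((1 - x) * Real.log (1 - x)) + (1 + x) * Real.log (1 + x)
        - 13 / 4 * x ^ 2) := by
  refine convexOn_of_hasDerivWithinAt2_nonneg (convex_Icc 0 1)
    (f' := fun x => Real.log x - 2 * Real.log (1 - x) + Real.log (1 + x) - 13 / 2 * x)
    (f'' := fun x => x⁻¹ + 2 * (1 - x)⁻¹ + (1 + x)⁻¹ - 13 / 2) ?_ ?_ ?_ ?_
  · have h := Real.continuous_mul_log
    have h1 : Continuous fun x : ℝ => (1 - x) * Real.log (1 - x) :=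
      h.comp (continuous_const.sub continuous_id)
    have h2 : Continuous fun x : ℝ => (1 + x) * Real.log (1 + x) :=
      h.comp (continuous_const.add continuous_id)
    exact (((h.add (h1.const_mul 2)).add h2).sub (by fun_prop)).continuousOn
  · intro x hx
    rw [interior_Icc] at hx
    exact (hasDerivAt_ent hx.1 hx.2).hasDerivWithinAt
  · intro x hx
    rw [interior_Icc] at hx
    obtain ⟨h0, h1⟩ := hx
    refine HasDerivAt.hasDerivWithinAt ?_
    have e1 := Real.hasDerivAt_log h0.ne'
    have e2 : HasDerivAt (fun x => Real.log (1 - x)) ((1 - x)⁻¹ * -1) x :=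
      (Real.hasDerivAt_log (x := 1 - x) (by linarith)).comp x ((hasDerivAt_id x).const_sub 1)
    have e3 : HasDerivAt (fun x => Real.log (1 + x)) ((1 + x)⁻¹ * 1) x :=
      (Real.hasDerivAt_log (x := 1 + x) (by linarith)).comp x ((hasDerivAt_id x).const_add 1)
    have e4 := (hasDerivAt_id x).const_mul (13 / 2 : ℝ)
    exact (((e1.sub (e2.const_mul 2)).add e3).sub e4).congr_deriv (by ring)
  · intro x hx
    rw [interior_Icc] at hx
    obtain ⟨h0, h1⟩ := hx
    have h2 : 0 < 1 - x := by linarith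
    have h3 : 0 < 1 + x := by linarith
    have : x⁻¹ + 2 * (1 - x)⁻¹ + (1 + x)⁻¹ - 13 / 2
        = (13 / 2 * x ^ 3 - 7 / 2 * x + 1) / (x * (1 - x) * (1 + x)) := by
      field_simp; ring
    rw [this]
    refine div_nonneg ?_ (by positivity)
    nlinarith [mul_nonneg h0.le (sq_nonneg (x - 3 / 7)), sq_nonneg (x - 3 / 7)]

/-- Tangent parabola bound for `entRate` at `u`. -/
lemma entRate_le {u x : ℝ} (hu0 : 0 < u) (hu1 : u < 1) (hx0 : 0 ≤ x) (hx1 : x ≤ 1) :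
    entRate x ≤ entRate u + (2 * Real.log (1 - u) - Real.log u - Real.log (1 + u)) * (x - u)
      - 13 / 4 * (x - u) ^ 2 := by
  have hc := entRate_strong_concave
  have hd := hasDerivAt_ent hu0 hu1
  have hus : u ∈ Set.Icc (0 : ℝ) 1 := ⟨hu0.le, hu1.le⟩
  have hxs : x ∈ Set.Icc (0 : ℝ) 1 := ⟨hx0, hx1⟩
  unfold entRate
  rcases lt_trichotomy u x with h | h | h
  · have := hc.le_slope_of_hasDerivAt hus hxs h hd
    rw [slope_def_field, le_div_iff₀ (by linarith)] at this
    nlinarith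
  · rw [h]; simp
  · have := hc.slope_le_of_hasDerivAt hxs hus h hd
    rw [slope_def_field, div_le_iff₀ (by linarith)] at this
    nlinarith

lemma entRate_third : entRate (1 / 3) = 0 := by
  unfold entRate
  have h1 : Real.log (1 / 3) = -Real.log 3 := by rw [one_div, Real.log_inv]
  have h2 : Real.log (1 - 1 / 3) = Real.log 2 - Real.log 3 := by
    rw [← Real.log_div (by norm_num) (by norm_num)]; norm_num
  have h3 : Real.log (1 + 1 / 3) = 2 * Real.log 2 - Real.log 3 := by
    rw [show (1 + 1 / 3 : ℝ) = 2 ^ 2 / 3 by norm_num, Real.log_div (by norm_num) (by norm_num),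
      Real.log_pow]; norm_num
  rw [h1, h2, h3]; ring

/-- Tangent line bound for the logarithm at `G`. -/
lemma log_corr_le {x G : ℝ} (hx : 0 ≤ x) (hG : 0 < G) :
    Real.log (corr x) ≤ Real.log G + corr x / G - 1 := by
  have hc : 0 < corr x := lt_of_lt_of_le one_pos (one_le_corr hx)
  have := Real.log_le_sub_one_of_pos (div_pos hc hG)
  rw [Real.log_div hc.ne' hG.ne'] at this
  linarith

lemma log_235 (a b c : ℤ) :
    Real.log ((2 : ℝ) ^ a * 3 ^ b * 5 ^ c) = a * Real.log 2 + b * Real.log 3 + c * Real.log 5 := by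
  rw [Real.log_mul (by positivity) (by positivity), Real.log_mul (by positivity) (by positivity),
    Real.log_zpow, Real.log_zpow, Real.log_zpow]

lemma log_235_eq (y : ℝ) (a b c : ℤ) (h : y = (2 : ℝ) ^ a * 3 ^ b * 5 ^ c) :
    Real.log y = a * Real.log 2 + b * Real.log 3 + c * Real.log 5 := by
  rw [h, log_235]

/-- Tangent bounds for `entRate` at `u` and for the logarithm at `G`, with the constants replaced
by decimal approximations `E` and `D`. -/
lemma rate_le_of_approx {u x G E D : ℝ} (hu0 : 0 < u) (hu1 : u < 1) (hx0 : 0 ≤ x) (hx1 : x ≤ 1)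
    (hG : 0 < G) (hE : entRate u + 41 / 25 * Real.log G ≤ E)
    (hD : |2 * Real.log (1 - u) - Real.log u - Real.log (1 + u) - D| ≤ 1 / 10 ^ 6)
    (h : E + D * (x - u) + 1 / 10 ^ 6 - 13 / 4 * (x - u) ^ 2 + 41 / 25 * (corr x / G - 1)
      ≤ -(1 / 1000)) :
    entRate x + 41 / 25 * Real.log (corr x) ≤ -(1 / 1000 * (x - 1 / 3) ^ 2) := by
  have h1 := entRate_le hu0 hu1 hx0 hx1
  have h2 := log_corr_le hx0 hG
  set D' := 2 * Real.log (1 - u) - Real.log u - Real.log (1 + u)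
  have h3 : (D' - D) * (x - u) ≤ 1 / 10 ^ 6 * 1 := by
    refine (le_abs_self _).trans ?_
    rw [abs_mul]
    exact mul_le_mul hD (abs_le.2 ⟨by linarith, by linarith⟩) (abs_nonneg _) (by norm_num)
  nlinarith

/-- The second moment rate, at clause density `41/75 > 0.546`, has its unique maximum at
overlap `1/3`. For `x ≤ 1/2` this follows from the uniform concavity of `entRate`; on `[1/2, 1]`,
where a second local maximum comes within `0.004` of zero, tangent bounds at four points are
used. -/
lemma rate_le {x : ℝ} (hx0 : 0 ≤ x) (hx1 : x ≤ 1) :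
    entRate x + 41 / 25 * Real.log (corr x) ≤ -(1 / 1000 * (x - 1 / 3) ^ 2) := by
  have l2 := Real.log_two_lt_d9
  have l2' := Real.log_two_gt_d9
  have l3 := Real.log_three_lt_d9
  have l3' := Real.log_three_gt_d9
  have l5 := Real.log_five_lt_d9
  have l5' := Real.log_five_gt_d9
  rcases le_total x (1 / 2) with h | h
  · have h1 := entRate_le (u := 1 / 3) (by norm_num) (by norm_num) hx0 hx1
    have h2 := log_corr_le (x := x) (G := 1) hx0 one_pos
    rw [entRate_third] at h1
    have h3 : 2 * Real.log (1 - 1 / 3) - Real.log (1 / 3) - Real.log (1 + 1 / 3) = 0 := by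
      rw [log_235_eq (1 - 1 / 3) 1 (-1) 0 (by norm_num), log_235_eq (1 / 3) 0 (-1) 0 (by norm_num),
        log_235_eq (1 + 1 / 3) 2 (-1) 0 (by norm_num)]
      push_cast; ring
    rw [h3] at h1
    rw [Real.log_one, corr_eq] at h2
    rw [corr_eq]
    nlinarith [mul_nonneg (sq_nonneg (x - 1 / 3)) (sub_nonneg.2 h)]
  rcases le_total x 0.56 with h' | h'
  · refine rate_le_of_approx (u := 1 / 2) (G := 135 / 128) (E := -0.004404) (D := -1.098612)
      (by norm_num) (by norm_num) hx0 hx1 (by norm_num) ?_ ?_ ?_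
    · unfold entRate
      rw [log_235_eq (1/2) (-1) 0 0 (by norm_num), log_235_eq (1 - 1/2) (-1) 0 0 (by norm_num),
        log_235_eq (1 + 1/2) (-1) 1 0 (by norm_num), log_235_eq (135/128) (-7) 3 1 (by norm_num)]
      push_cast
      linarith
    · rw [log_235_eq (1/2) (-1) 0 0 (by norm_num), log_235_eq (1 - 1/2) (-1) 0 0 (by norm_num),
        log_235_eq (1 + 1/2) (-1) 1 0 (by norm_num), abs_le]
      push_cast
      constructor <;> linarith
    · unfold corr
      nlinarith [mul_nonneg (sub_nonneg.2 h) (sub_nonneg.2 h'),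
        mul_nonneg (mul_nonneg (sub_nonneg.2 h) (sub_nonneg.2 h')) hx0]
  clear h; rename' h' => h
  rcases le_total x 0.64 with h' | h'
  · refine rate_le_of_approx (u := 3 / 5) (G := 144 / 125) (E := -0.003666) (D := -1.791759)
      (by norm_num) (by norm_num) hx0 hx1 (by norm_num) ?_ ?_ ?_
    · unfold entRate
      rw [log_235_eq (3/5) 0 1 (-1) (by norm_num), log_235_eq (1 - 3/5) 1 0 (-1) (by norm_num),
        log_235_eq (1 + 3/5) 3 0 (-1) (by norm_num), log_235_eq (144/125) 4 2 (-3) (by norm_num)]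
      push_cast
      linarith
    · rw [log_235_eq (3/5) 0 1 (-1) (by norm_num), log_235_eq (1 - 3/5) 1 0 (-1) (by norm_num),
        log_235_eq (1 + 3/5) 3 0 (-1) (by norm_num), abs_le]
      push_cast
      constructor <;> linarith
    · unfold corr
      nlinarith [mul_nonneg (sub_nonneg.2 h) (sub_nonneg.2 h'),
        mul_nonneg (mul_nonneg (sub_nonneg.2 h) (sub_nonneg.2 h')) hx0]
  clear h; rename' h' => h
  rcases le_total x 0.74 with h' | h'
  · refine rate_le_of_approx (u := 2 / 3) (G := 5 / 4) (E := -0.005950) (D := -2.302585)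
      (by norm_num) (by norm_num) hx0 hx1 (by norm_num) ?_ ?_ ?_
    · unfold entRate
      rw [log_235_eq (2/3) 1 (-1) 0 (by norm_num), log_235_eq (1 - 2/3) 0 (-1) 0 (by norm_num),
        log_235_eq (1 + 2/3) 0 (-1) 1 (by norm_num), log_235_eq (5/4) (-2) 0 1 (by norm_num)]
      push_cast
      linarith
    · rw [log_235_eq (2/3) 1 (-1) 0 (by norm_num), log_235_eq (1 - 2/3) 0 (-1) 0 (by norm_num),
        log_235_eq (1 + 2/3) 0 (-1) 1 (by norm_num), abs_le]
      push_cast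
      constructor <;> linarith
    · unfold corr
      nlinarith [mul_nonneg (sub_nonneg.2 h) (sub_nonneg.2 h'),
        mul_nonneg (mul_nonneg (sub_nonneg.2 h) (sub_nonneg.2 h')) hx0]
  clear h; rename' h' => h
  refine rate_le_of_approx (u := 4 / 5) (G := 3 / 2) (E := -0.094011) (D := -3.583519)
    (by norm_num) (by norm_num) hx0 hx1 (by norm_num) ?_ ?_ ?_
  · unfold entRate
    rw [log_235_eq (4/5) 2 0 (-1) (by norm_num), log_235_eq (1 - 4/5) 0 0 (-1) (by norm_num),
      log_235_eq (1 + 4/5) 0 2 (-1) (by norm_num), log_235_eq (3/2) (-1) 1 0 (by norm_num)]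
    push_cast
    linarith
  · rw [log_235_eq (4/5) 2 0 (-1) (by norm_num), log_235_eq (1 - 4/5) 0 0 (-1) (by norm_num),
      log_235_eq (1 + 4/5) 0 2 (-1) (by norm_num), abs_le]
    push_cast
    constructor <;> linarith
  · unfold corr
    nlinarith [mul_nonneg (sub_nonneg.2 h) (sub_nonneg.2 hx1),
      mul_nonneg (mul_nonneg (sub_nonneg.2 h) (sub_nonneg.2 hx1)) hx0]

/-! ### Stirling bounds and summation over the overlap -/

lemma self_div_exp_pow (n : ℕ) : ((n : ℝ) / Real.exp 1) ^ n = Real.exp (n * Real.log n - n) := by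
  rcases Nat.eq_zero_or_pos n with rfl | hn
  · simp
  · have hn' : (0 : ℝ) < n := by exact_mod_cast hn
    rw [div_pow, ← Real.exp_nat_mul, mul_one, Real.exp_sub, mul_comm (n : ℝ) (Real.log n),
      Real.exp_mul, Real.exp_log hn', Real.rpow_natCast]

lemma sqrt_mul_exp_le_factorial (n : ℕ) :
    √((n : ℝ) + 1) * Real.exp (n * Real.log n - n) ≤ n.factorial := by
  rcases Nat.eq_zero_or_pos n with rfl | hn
  · simp
  · rw [← self_div_exp_pow]
    refine le_trans ?_ (Stirling.le_factorial_stirling n)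
    have hn' : (1 : ℝ) ≤ n := by exact_mod_cast hn
    gcongr
    nlinarith [Real.pi_gt_three]

lemma factorial_le_mul_exp {n : ℕ} (hn : 1 ≤ n) :
    (n.factorial : ℝ) ≤ Real.exp 1 * √(n : ℝ) * Real.exp (n * Real.log n - n) := by
  rw [← self_div_exp_pow]
  obtain ⟨j, rfl⟩ : ∃ j, n = j + 1 := ⟨n - 1, by omega⟩
  have h := Stirling.stirlingSeq'_antitone (Nat.zero_le j)
  simp only [Function.comp, Nat.succ_eq_add_one, zero_add, Stirling.stirlingSeq_one] at h
  unfold Stirling.stirlingSeq at h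
  rw [div_le_iff₀ (by positivity)] at h
  refine h.trans (le_of_eq ?_)
  rw [Real.sqrt_mul (by norm_num)]
  have : √(2 : ℝ) ≠ 0 := by positivity
  field_simp

/-- The probability that a uniform `k`-subset of a `3k`-set meets a fixed `k`-subset in `A`
points. -/
noncomputable def hypWeight (k A : ℕ) : ℝ :=
  (k.choose A : ℝ) * ((2 * k).choose (k - A)) / ((3 * k).choose k)

lemma hypWeight_le {k A : ℕ} (hk : 1 ≤ k) (hA : A ≤ k) :
    hypWeight k A ≤ 2 * Real.exp 1 ^ 4 * (k / (√((A : ℝ) + 1) * ((k - A : ℝ) + 1))) *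
      Real.exp (k * entRate (A / k)) := by
  have hk' : (1 : ℝ) ≤ k := by exact_mod_cast hk
  have hk0 : (0 : ℝ) < k := by linarith
  obtain ⟨B, rfl⟩ : ∃ B, k = A + B := ⟨k - A, by omega⟩
  set k := A + B with hkd
  have hB : k - A = B := by omega
  have hBr : (k - A : ℝ) = B := by rw [hkd]; push_cast; ring
  have c1 : (k.choose A : ℝ) = k.factorial / (A.factorial * B.factorial) := by
    rw [Nat.cast_choose ℝ hA, hB]
  have c2 : ((2 * k).choose B : ℝ) = (2 * k).factorial / (B.factorial * (k + A).factorial) := by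
    rw [Nat.cast_choose ℝ (by omega), show 2 * k - B = k + A by omega]
  have c3 : ((3 * k).choose k : ℝ) = (3 * k).factorial / (k.factorial * (2 * k).factorial) := by
    rw [Nat.cast_choose ℝ (by omega), show 3 * k - k = 2 * k by omega]
  have hw : hypWeight k A = (k.factorial : ℝ) ^ 2 * ((2 * k).factorial : ℝ) ^ 2 /
      (A.factorial * (B.factorial : ℝ) ^ 2 * (k + A).factorial * (3 * k).factorial) := by
    unfold hypWeight
    rw [hB, c1, c2, c3]
    field_simp
  rw [hw, hBr]
  set st : ℕ → ℝ := fun n => Real.exp (n * Real.log n - n) with hst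
  have hpos : ∀ n, 0 < st n := fun n => Real.exp_pos _
  have u1 : (k.factorial : ℝ) ≤ Real.exp 1 * √(k : ℝ) * st k := factorial_le_mul_exp hk
  have u2 : ((2 * k).factorial : ℝ) ≤ Real.exp 1 * √((2 * k : ℕ) : ℝ) * st (2 * k) :=
    factorial_le_mul_exp (by omega)
  have d1 : √((A : ℝ) + 1) * st A ≤ A.factorial := sqrt_mul_exp_le_factorial A
  have d2 : √((B : ℝ) + 1) * st B ≤ B.factorial := sqrt_mul_exp_le_factorial B
  have d3 : √(k : ℝ) * st (k + A) ≤ (k + A).factorial := by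
    refine le_trans ?_ (sqrt_mul_exp_le_factorial (k + A))
    have : (k : ℝ) ≤ ((k + A : ℕ) : ℝ) + 1 := by
      push_cast; linarith [(Nat.cast_nonneg A : (0 : ℝ) ≤ A)]
    exact mul_le_mul_of_nonneg_right (Real.sqrt_le_sqrt this) (hpos _).le
  have d4 : √(k : ℝ) * st (3 * k) ≤ (3 * k).factorial := by
    refine le_trans ?_ (sqrt_mul_exp_le_factorial (3 * k))
    have : (k : ℝ) ≤ ((3 * k : ℕ) : ℝ) + 1 := by push_cast; linarith
    exact mul_le_mul_of_nonneg_right (Real.sqrt_le_sqrt this) (hpos _).le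
  have key : st k ^ 2 * st (2 * k) ^ 2 / (st A * st B ^ 2 * st (k + A) * st (3 * k)) =
      Real.exp (k * entRate (A / k)) := by
    have hl : ∀ n : ℕ, (n : ℝ) * Real.log n = n * Real.log (n / k) + n * Real.log k := by
      intro n
      rcases Nat.eq_zero_or_pos n with rfl | hn
      · simp
      · rw [Real.log_div (by positivity) hk0.ne']; ring
    simp only [hst]
    rw [← Real.exp_nat_mul, ← Real.exp_nat_mul, ← Real.exp_nat_mul, ← Real.exp_add,
      ← Real.exp_add, ← Real.exp_add, ← Real.exp_add, ← Real.exp_sub]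
    congr 1
    rw [hl A, hl B, hl (k + A), hl (2 * k), hl (3 * k)]
    have e1 : ((2 * k : ℕ) : ℝ) / k = 2 := by push_cast; field_simp
    have e2 : ((3 * k : ℕ) : ℝ) / k = 3 := by push_cast; field_simp
    have e3 : ((k + A : ℕ) : ℝ) / k = 1 + A / k := by push_cast; field_simp
    have e4 : (B : ℝ) / k = 1 - A / k := by rw [← hBr]; field_simp
    rw [e1, e2, e3, e4]
    unfold entRate
    have e5 : (B : ℝ) = k - A := hBr.symm
    push_cast
    rw [e5]
    field_simp
    ring
  rw [← key]
  have hsq : √((B : ℝ) + 1) ^ 2 = B + 1 := Real.sq_sqrt (by positivity)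
  have hk2 : √(k : ℝ) ^ 2 = k := Real.sq_sqrt hk0.le
  have h2k2 : √((2 * k : ℕ) : ℝ) ^ 2 = 2 * k := by
    rw [Real.sq_sqrt (by positivity)]; push_cast; ring
  have p1 := hpos A
  have p2 := hpos B
  have p3 := hpos (k + A)
  have p4 := hpos (3 * k)
  calc (k.factorial : ℝ) ^ 2 * ((2 * k).factorial : ℝ) ^ 2 /
      (A.factorial * (B.factorial : ℝ) ^ 2 * (k + A).factorial * (3 * k).factorial)
      ≤ (Real.exp 1 * √(k : ℝ) * st k) ^ 2 * (Real.exp 1 * √((2 * k : ℕ) : ℝ) * st (2 * k)) ^ 2 /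
        ((√((A : ℝ) + 1) * st A) * (√((B : ℝ) + 1) * st B) ^ 2 * (√(k : ℝ) * st (k + A)) *
          (√(k : ℝ) * st (3 * k))) := by
        gcongr
    _ = 2 * Real.exp 1 ^ 4 * (k / (√((A : ℝ) + 1) * (B + 1))) *
        (st k ^ 2 * st (2 * k) ^ 2 / (st A * st B ^ 2 * st (k + A) * st (3 * k))) := by
        simp only [mul_pow, hsq, hk2, h2k2]
        have : √(k : ℝ) * √(k : ℝ) = k := Real.mul_self_sqrt hk0.le
        field_simp
        rw [hk2]
        ring

/-- Comparison of the Gaussian-type bound on the weights with a summable Cauchy-type kernel.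
Near `A = k/3` the prefactor is of order `k^(-1/2)`; elsewhere the exponential beats any power. -/
lemma prefactor_mul_exp_le {k A : ℕ} (hk : 1 ≤ k) (hA : A ≤ k) :
    (k : ℝ) / (√((A : ℝ) + 1) * ((k - A : ℝ) + 1)) *
      Real.exp (k * -(1 / 1000 * ((A : ℝ) / k - 1 / 3) ^ 2)) ≤
    (36000 ^ 2 * 37000 * 6) * (√(k : ℝ) / (k + ((A : ℝ) - k / 3) ^ 2)) := by
  have hk' : (1 : ℝ) ≤ k := by exact_mod_cast hk
  have hk0 : (0 : ℝ) < k := by linarith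
  have hA' : (A : ℝ) ≤ k := by exact_mod_cast hA
  have hA0 : (0 : ℝ) ≤ A := by positivity
  set d : ℝ := (A : ℝ) - k / 3 with hd
  set x : ℝ := d ^ 2 / (1000 * k) with hx
  have hx0 : 0 ≤ x := by positivity
  have hex : (k : ℝ) * -(1 / 1000 * ((A : ℝ) / k - 1 / 3) ^ 2) = -x := by
    rw [hx, hd]; field_simp
  have hdx : d ^ 2 = 1000 * k * x := by rw [hx]; field_simp
  rw [hex, Real.exp_neg]
  have hs : √(k : ℝ) * √(k : ℝ) = k := Real.mul_self_sqrt hk0.le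
  have hs0 : 0 < √(k : ℝ) := Real.sqrt_pos.2 hk0
  have hs1 : 1 ≤ √(k : ℝ) := Real.one_le_sqrt.2 hk'
  rw [← div_eq_mul_inv, div_div, mul_div_assoc', div_le_div_iff₀ (by positivity) (by positivity)]
  by_cases hc : |d| ≤ k / 6
  · obtain ⟨h1, h2⟩ := abs_le.1 hc
    have hB : (k : ℝ) / 2 ≤ k - A + 1 := by linarith
    have hsA : √(k : ℝ) / 3 ≤ √((A : ℝ) + 1) := by
      apply Real.le_sqrt_of_sq_le
      rw [div_pow, Real.sq_sqrt hk0.le]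
      linarith
    have he : 1 + x ≤ Real.exp x := by linarith [Real.add_one_le_exp x]
    calc (k : ℝ) * (k + d ^ 2) ≤ k * (1000 * k * (1 + x)) := by
          rw [hdx]; gcongr; nlinarith
      _ = 6000 * (√(k : ℝ) * (√(k : ℝ) / 3 * (k / 2) * (1 + x))) := by
          linear_combination -1000 * k * (1 + x) * hs
      _ ≤ 6000 * (√(k : ℝ) * (√((A : ℝ) + 1) * (k - A + 1) * Real.exp x)) := by gcongr
      _ ≤ 36000 ^ 2 * 37000 * 6 * √(k : ℝ) * (√((A : ℝ) + 1) * (k - A + 1) * Real.exp x) := by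
          have : 0 ≤ (k - A : ℝ) := by linarith
          have : 0 ≤ √(k : ℝ) * (√((A : ℝ) + 1) * (k - A + 1) * Real.exp x) := by positivity
          linarith
  · have hc' : k / 6 < |d| := not_le.1 hc
    have hd2 : (k : ℝ) ^ 2 ≤ 36 * d ^ 2 := by
      rw [← sq_abs d]; nlinarith
    have hkx : (k : ℝ) ≤ 36000 * x := by nlinarith
    have h3 : x ^ 3 ≤ 6 * Real.exp x := by
      have := Real.pow_div_factorial_le_exp x hx0 3
      simp [Nat.factorial] at this
      linarith
    have hsA : 1 ≤ √((A : ℝ) + 1) := Real.one_le_sqrt.2 (by linarith)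
    have hB : 1 ≤ (k - A + 1 : ℝ) := by linarith
    calc (k : ℝ) * (k + d ^ 2) ≤ k * (37 * d ^ 2) := by gcongr; nlinarith
      _ = 37000 * (k * k) * x := by rw [hdx]; ring
      _ ≤ 37000 * ((36000 * x) * (36000 * x)) * x := by gcongr
      _ = 36000 ^ 2 * 37000 * x ^ 3 := by ring
      _ ≤ 36000 ^ 2 * 37000 * (6 * Real.exp x) := by gcongr
      _ = 36000 ^ 2 * 37000 * 6 * 1 * (1 * 1 * Real.exp x) := by ring
      _ ≤ 36000 ^ 2 * 37000 * 6 * √(k : ℝ) * (√((A : ℝ) + 1) * (k - A + 1) * Real.exp x) := by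
          gcongr

/-- The Cauchy kernel sums to a constant: each term is dominated by an increment of
`arctan ((· - t) / √k)`. -/
lemma sum_cauchy_le {k : ℕ} (hk : 1 ≤ k) (t : ℝ) (N : ℕ) :
    ∑ A ∈ Finset.range N, √(k : ℝ) / (k + ((A : ℝ) - t) ^ 2) ≤ 4 * Real.pi := by
  have hk' : (1 : ℝ) ≤ k := by exact_mod_cast hk
  have hk0 : (0 : ℝ) < k := by linarith
  have hs0 : 0 < √(k : ℝ) := Real.sqrt_pos.2 hk0
  have hs : √(k : ℝ) ^ 2 = k := Real.sq_sqrt hk0.le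
  have step : ∀ A : ℕ, √(k : ℝ) / (k + ((A : ℝ) - t) ^ 2) ≤
      4 * (Real.arctan ((((A + 1 : ℕ) : ℝ) - t) / √k) - Real.arctan (((A : ℝ) - t) / √k)) := by
    intro A
    have hlt : ((A : ℝ) - t) / √k < (((A + 1 : ℕ) : ℝ) - t) / √k := by
      gcongr; linarith
    obtain ⟨c, ⟨hc1, hc2⟩, hc⟩ := exists_deriv_eq_slope Real.arctan hlt
      Real.continuous_arctan.continuousOn Real.differentiable_arctan.differentiableOn
    rw [Real.deriv_arctan, eq_div_iff (by linarith)] at hc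
    rw [← hc]
    have hdiff : (((A + 1 : ℕ) : ℝ) - t) / √k - ((A : ℝ) - t) / √k = 1 / √k := by
      push_cast; field_simp; ring
    rw [hdiff]
    set y := c * √(k : ℝ) with hy
    rw [div_lt_iff₀ hs0] at hc1
    rw [lt_div_iff₀ hs0] at hc2
    push_cast at hc2
    have hcy : c ^ 2 = y ^ 2 / k := by rw [hy, mul_pow, hs]; field_simp
    have hyb : y ^ 2 ≤ 2 * ((A : ℝ) - t) ^ 2 + 2 := by
      nlinarith [sq_nonneg (y - ((A : ℝ) - t) - ((A : ℝ) - t)), hc1, hc2]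
    beta_reduce
    rw [hcy]
    have : 4 * (1 / (1 + y ^ 2 / k) * (1 / √(k : ℝ))) = √(k : ℝ) / ((k + y ^ 2) / 4) := by
      field_simp
      rw [hs]
    rw [this]
    gcongr
    nlinarith [sq_nonneg ((A : ℝ) - t)]
  refine (Finset.sum_le_sum fun A _ => step A).trans ?_
  rw [← Finset.mul_sum, Finset.sum_range_sub (fun A : ℕ => Real.arctan (((A : ℝ) - t) / √k))]
  have h1 := Real.arctan_lt_pi_div_two (((N : ℝ) - t) / √k)
  have h2 := Real.neg_pi_div_two_lt_arctan ((((0 : ℕ) : ℝ) - t) / √k)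
  linarith

/-- The normalised second moment, up to a constant factor, is bounded uniformly in `k`. -/
lemma sum_hypWeight_le :
    ∃ K : ℝ, 0 < K ∧ ∀ k m : ℕ, 1 ≤ k → (m : ℝ) ≤ 41 / 25 * k →
      ∑ A ∈ Finset.range (k + 1), hypWeight k A * corr (A / k) ^ m ≤ K := by
  refine ⟨2 * Real.exp 1 ^ 4 * (36000 ^ 2 * 37000 * 6) * (4 * Real.pi), by positivity, ?_⟩
  intro k m hk hm
  have hk' : (1 : ℝ) ≤ k := by exact_mod_cast hk
  have hk0 : (0 : ℝ) < k := by linarith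
  refine le_trans (Finset.sum_le_sum (g := fun A : ℕ => 2 * Real.exp 1 ^ 4 *
    (36000 ^ 2 * 37000 * 6) * (√(k : ℝ) / (k + ((A : ℝ) - k / 3) ^ 2))) ?_) ?_
  · intro A hA
    have hA : A ≤ k := by simpa [Nat.lt_succ_iff] using hA
    have hA' : (A : ℝ) ≤ k := by exact_mod_cast hA
    have hx0 : (0 : ℝ) ≤ A / k := by positivity
    have hx1 : (A : ℝ) / k ≤ 1 := by rw [div_le_one hk0]; exact hA'
    have hc1 := one_le_corr hx0
    have hB : 0 ≤ (k - A : ℝ) := by linarith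
    have hpow : corr (A / k) ^ m ≤ Real.exp (k * (41 / 25 * Real.log (corr (A / k)))) := by
      rw [← Real.rpow_natCast, Real.rpow_def_of_pos (by linarith)]
      refine Real.exp_le_exp.2 ?_
      have := mul_le_mul_of_nonneg_left hm (Real.log_nonneg hc1)
      linarith
    calc hypWeight k A * corr (A / k) ^ m
        ≤ (2 * Real.exp 1 ^ 4 * (k / (√((A : ℝ) + 1) * ((k - A : ℝ) + 1))) *
          Real.exp (k * entRate (A / k))) * Real.exp (k * (41 / 25 * Real.log (corr (A / k)))) :=
          mul_le_mul (hypWeight_le hk hA) hpow (by positivity) (by positivity)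
      _ = 2 * Real.exp 1 ^ 4 * ((k / (√((A : ℝ) + 1) * ((k - A : ℝ) + 1))) *
          Real.exp (k * (entRate (A / k) + 41 / 25 * Real.log (corr (A / k))))) := by
          rw [mul_add (k : ℝ) (entRate _), Real.exp_add]; ring
      _ ≤ 2 * Real.exp 1 ^ 4 * ((k / (√((A : ℝ) + 1) * ((k - A : ℝ) + 1))) *
          Real.exp (k * -(1 / 1000 * ((A : ℝ) / k - 1 / 3) ^ 2))) := by
          gcongr
          exact rate_le hx0 hx1
      _ ≤ 2 * Real.exp 1 ^ 4 * ((36000 ^ 2 * 37000 * 6) *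
          (√(k : ℝ) / (k + ((A : ℝ) - k / 3) ^ 2))) := by
          exact mul_le_mul_of_nonneg_left (prefactor_mul_exp_le hk hA) (by positivity)
      _ = _ := by ring
  · rw [← Finset.mul_sum]
    gcongr
    exact sum_cauchy_le hk _ _

/-! ### Counting clauses and the second moment -/

noncomputable instance (n : ℕ) : Fintype (EC3Clause n) :=
  inferInstanceAs (Fintype {c : Finset (Fin n) // c.card = 3})

open Classical in
lemma card_forall_pi {C : Type*} [Fintype C] (m : ℕ) (p : C → Prop) :
    (Finset.univ.filter fun φ : Fin m → C => ∀ t, p (φ t)).card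
      = (Finset.univ.filter p).card ^ m := by
  rw [← Fintype.card_piFinset_const]
  congr 1
  ext φ
  simp [Fintype.mem_piFinset]

open Classical in
/-- The second moment inequality for the number of `i ∈ I` such that all of `m` independent
uniform elements of `C` satisfy `sat i`. -/
lemma second_moment {C ι : Type*} [Fintype C] (m : ℕ) (I : Finset ι) (sat : ι → C → Prop) :
    (∑ i ∈ I, ((Finset.univ.filter fun c => sat i c).card : ℝ) ^ m) ^ 2 ≤
      ((Finset.univ.filter fun φ : Fin m → C => ∃ i ∈ I, ∀ t, sat i (φ t)).card : ℝ) *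
        ∑ i ∈ I, ∑ j ∈ I, ((Finset.univ.filter fun c => sat i c ∧ sat j c).card : ℝ) ^ m := by
  set X : (Fin m → C) → ℝ := fun φ => ∑ i ∈ I, if ∀ t, sat i (φ t) then 1 else 0 with hX
  set G := Finset.univ.filter fun φ : Fin m → C => ∃ i ∈ I, ∀ t, sat i (φ t) with hG
  have h1 : ∑ i ∈ I, ((Finset.univ.filter fun c => sat i c).card : ℝ) ^ m = ∑ φ, X φ := by
    simp only [hX]
    rw [Finset.sum_comm]
    refine Finset.sum_congr rfl fun i _ => ?_
    rw [Finset.sum_boole, card_forall_pi m (fun c => sat i c)]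
    push_cast; rfl
  have h2 : ∑ i ∈ I, ∑ j ∈ I, ((Finset.univ.filter fun c => sat i c ∧ sat j c).card : ℝ) ^ m
      = ∑ φ, X φ ^ 2 := by
    symm
    simp only [hX, sq, Finset.sum_mul_sum]
    rw [Finset.sum_comm]
    refine Finset.sum_congr rfl fun i _ => ?_
    rw [Finset.sum_comm]
    refine Finset.sum_congr rfl fun j _ => ?_
    simp only [mul_ite, mul_one, mul_zero, ← ite_and]
    rw [Finset.sum_boole]
    have := card_forall_pi m (fun c => sat i c ∧ sat j c)
    rw [← Nat.cast_pow]
    congr 1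
    refine Eq.trans (congrArg Finset.card ?_) (this.trans ?_)
    · ext φ
      simp [forall_and, and_comm]
    · congr!
  have h3 : ∑ φ, X φ = ∑ φ ∈ G, X φ := by
    symm
    refine Finset.sum_subset (Finset.subset_univ _) fun φ _ hφ => ?_
    refine Finset.sum_eq_zero fun i hi => ?_
    rw [if_neg]
    intro h
    exact hφ (by simp only [hG, Finset.mem_filter, Finset.mem_univ, true_and]; exact ⟨i, hi, h⟩)
  rw [h1, h2, h3]
  refine sq_sum_le_card_mul_sum_sq.trans (mul_le_mul_of_nonneg_left ?_ (Nat.cast_nonneg _))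
  exact Finset.sum_le_sum_of_subset_of_nonneg (Finset.subset_univ _) fun _ _ _ => sq_nonneg _

lemma card_clause_filter {n : ℕ} (p : Finset (Fin n) → Prop) [DecidablePred p]
    [DecidablePred fun c : EC3Clause n => p c.1] :
    (Finset.univ.filter fun c : EC3Clause n => p c.1).card
      = ((Finset.powersetCard 3 (Finset.univ : Finset (Fin n))).filter p).card := by
  refine Finset.card_bij (fun c _ => c.1) ?_ ?_ ?_
  · intro c hc
    simp only [Finset.mem_filter, Finset.mem_univ, true_and] at hc
    simp only [Finset.mem_filter, Finset.mem_powersetCard, Finset.subset_univ, true_and]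
    exact ⟨c.2, hc⟩
  · intro c _ d _ h
    exact Subtype.ext h
  · intro c hc
    simp only [Finset.mem_filter, Finset.mem_powersetCard, Finset.subset_univ, true_and] at hc
    exact ⟨⟨c, hc.1⟩, Finset.mem_filter.2 ⟨Finset.mem_univ _, hc.2⟩, rfl⟩

lemma card_clause (n : ℕ) : Nat.card (EC3Clause n) = n.choose 3 := by
  classical
  rw [Nat.card_eq_fintype_card, ← Finset.card_univ]
  have := card_clause_filter (n := n) (fun _ => True)
  simpa using this

/-- Clauses met exactly once by `S`: choose the element of `S`, then two elements outside. -/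
lemma le_card_sat {n : ℕ} (S : Finset (Fin n)) :
    S.card * (n - S.card).choose 2 ≤
      ((Finset.powersetCard 3 (Finset.univ : Finset (Fin n))).filter
        fun c => (c ∩ S).card = 1).card := by
  have hc : (S ×ˢ Finset.powersetCard 2 Sᶜ).card = S.card * (n - S.card).choose 2 := by
    rw [Finset.card_product, Finset.card_powersetCard, Finset.card_compl, Fintype.card_fin]
  rw [← hc]
  have key : ∀ x ∈ S, ∀ e ⊆ Sᶜ, insert x e ∩ S = {x} := by
    intro x hx e he
    ext y
    simp only [Finset.mem_inter, Finset.mem_insert, Finset.mem_singleton]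
    constructor
    · rintro ⟨h | h, hy⟩
      · exact h
      · exact absurd hy (Finset.mem_compl.1 (he h))
    · rintro rfl
      exact ⟨Or.inl rfl, hx⟩
  have hnot : ∀ x ∈ S, ∀ e ⊆ Sᶜ, x ∉ e := fun x hx e he h => Finset.mem_compl.1 (he h) hx
  refine Finset.card_le_card_of_injOn (fun p => insert p.1 p.2) ?_ ?_
  · rintro ⟨x, e⟩ hp
    simp only [Finset.coe_product, Set.mem_prod, Finset.mem_coe, Finset.mem_powersetCard] at hp
    obtain ⟨hx, he, he2⟩ := hp
    simp only [Finset.coe_filter, Finset.mem_powersetCard, Finset.subset_univ, true_and,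
      Set.mem_ofPred_eq]
    rw [key x hx e he, Finset.card_insert_of_notMem (hnot x hx e he), he2]
    simp
  · rintro ⟨x, e⟩ hp ⟨y, f⟩ hq h
    simp only [Finset.coe_product, Set.mem_prod, Finset.mem_coe, Finset.mem_powersetCard] at hp hq h
    obtain ⟨hx, he, he2⟩ := hp
    obtain ⟨hy, hf, hf2⟩ := hq
    have hxy : x = y := by
      have := key x hx e he
      rw [h, key y hy f hf] at this
      exact (Finset.singleton_injective this).symm
    subst hxy
    have : e = f := by
      rw [← Finset.erase_insert (hnot x hx e he), h, Finset.erase_insert (hnot x hx f hf)]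
    rw [this]

/-- Clauses met exactly once by both `S` and `T`: either the same variable is true in both
assignments, or different ones are. -/
lemma card_sat_pair_le {n : ℕ} (S T : Finset (Fin n)) :
    ((Finset.powersetCard 3 (Finset.univ : Finset (Fin n))).filter
        fun c => (c ∩ S).card = 1 ∧ (c ∩ T).card = 1).card ≤
      (S ∩ T).card * ((S ∪ T)ᶜ.card).choose 2 + (S \ T).card * ((T \ S).card * (S ∪ T)ᶜ.card) := by
  classical
  have hc1 : ((S ∩ T) ×ˢ Finset.powersetCard 2 (S ∪ T)ᶜ).card
      = (S ∩ T).card * ((S ∪ T)ᶜ.card).choose 2 := by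
    rw [Finset.card_product, Finset.card_powersetCard]
  have hc2 : ((S \ T) ×ˢ ((T \ S) ×ˢ (S ∪ T)ᶜ)).card
      = (S \ T).card * ((T \ S).card * (S ∪ T)ᶜ.card) := by
    rw [Finset.card_product, Finset.card_product]
  rw [← hc1, ← hc2]
  refine le_trans (Finset.card_le_card (t :=
    ((S ∩ T) ×ˢ Finset.powersetCard 2 (S ∪ T)ᶜ).image (fun p => insert p.1 p.2) ∪
    ((S \ T) ×ˢ ((T \ S) ×ˢ (S ∪ T)ᶜ)).image (fun p => {p.1, p.2.1, p.2.2})) ?_)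
    ((Finset.card_union_le _ _).trans (add_le_add Finset.card_image_le Finset.card_image_le))
  intro c hc
  simp only [Finset.mem_filter, Finset.mem_powersetCard, Finset.subset_univ, true_and] at hc
  obtain ⟨h3, hS, hT⟩ := hc
  obtain ⟨x, hx⟩ := Finset.card_eq_one.1 hS
  obtain ⟨y, hy⟩ := Finset.card_eq_one.1 hT
  have hx' : x ∈ c ∧ x ∈ S := Finset.mem_inter.1 (by rw [hx]; simp)
  have hy' : y ∈ c ∧ y ∈ T := Finset.mem_inter.1 (by rw [hy]; simp)
  have hxu : ∀ z ∈ c, z ∈ S → z = x := fun z h1 h2 =>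
    Finset.mem_singleton.1 (hx ▸ Finset.mem_inter.2 ⟨h1, h2⟩)
  have hyu : ∀ z ∈ c, z ∈ T → z = y := fun z h1 h2 =>
    Finset.mem_singleton.1 (hy ▸ Finset.mem_inter.2 ⟨h1, h2⟩)
  rw [Finset.mem_union]
  by_cases hxy : x = y
  · left
    subst hxy
    refine Finset.mem_image.2 ⟨(x, c.erase x), ?_, Finset.insert_erase hx'.1⟩
    simp only [Finset.mem_product, Finset.mem_inter, Finset.mem_powersetCard]
    refine ⟨⟨hx'.2, hy'.2⟩, ?_, ?_⟩
    · intro z hz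
      rw [Finset.mem_erase] at hz
      simp only [Finset.mem_compl, Finset.mem_union, not_or]
      exact ⟨fun h => hz.1 (hxu z hz.2 h), fun h => hz.1 (hyu z hz.2 h)⟩
    · rw [Finset.card_erase_of_mem hx'.1, h3]
  · right
    have hyx : y ∈ c.erase x := Finset.mem_erase.2 ⟨Ne.symm hxy, hy'.1⟩
    have hcard : ((c.erase x).erase y).card = 1 := by
      rw [Finset.card_erase_of_mem hyx, Finset.card_erase_of_mem hx'.1, h3]
    obtain ⟨z, hz⟩ := Finset.card_eq_one.1 hcard
    have hzm : z ∈ (c.erase x).erase y := by rw [hz]; simp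
    simp only [Finset.mem_erase] at hzm
    refine Finset.mem_image.2 ⟨(x, y, z), ?_, ?_⟩
    · simp only [Finset.mem_product, Finset.mem_sdiff, Finset.mem_compl, Finset.mem_union, not_or]
      exact ⟨⟨hx'.2, fun h => hxy (hyu x hx'.1 h)⟩, ⟨hy'.2, fun h => hxy (hxu y hy'.1 h).symm⟩,
        fun h => hzm.2.1 (hxu z hzm.2.2 h), fun h => hzm.1 (hyu z hzm.2.2 h)⟩
    · simp only
      rw [← hz, Finset.insert_erase hyx, Finset.insert_erase hx'.1]

/-- Hypergeometric count of the `k`-sets with prescribed intersection with `S`. -/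
lemma card_inter_fiber_le {n k A : ℕ} (S : Finset (Fin n)) (hS : S.card = k) :
    ((Finset.powersetCard k (Finset.univ : Finset (Fin n))).filter
      fun T => (S ∩ T).card = A).card ≤ k.choose A * (n - k).choose (k - A) := by
  have hc : (Finset.powersetCard A S ×ˢ Finset.powersetCard (k - A) Sᶜ).card
      = k.choose A * (n - k).choose (k - A) := by
    rw [Finset.card_product, Finset.card_powersetCard, Finset.card_powersetCard,
      Finset.card_compl, Fintype.card_fin, hS]
  rw [← hc]
  refine Finset.card_le_card_of_injOn (fun T => (S ∩ T, T \ S)) ?_ ?_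
  · intro T hT
    simp only [Finset.coe_filter, Finset.mem_powersetCard, Finset.subset_univ, true_and,
      Set.mem_ofPred_eq] at hT
    simp only [Finset.coe_product, Set.mem_prod, Finset.mem_coe, Finset.mem_powersetCard]
    refine ⟨⟨Finset.inter_subset_left, hT.2⟩, ?_, ?_⟩
    · intro z hz
      exact Finset.mem_compl.2 (Finset.mem_sdiff.1 hz).2
    · have := Finset.card_sdiff_add_card_inter T S
      rw [Finset.inter_comm, hT.1, hT.2] at this
      omega
  · intro T _ T' _ h
    simp only [Prod.mk.injEq] at h
    rw [← Finset.sdiff_union_inter T S, ← Finset.sdiff_union_inter T' S, h.2,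
      Finset.inter_comm T S, Finset.inter_comm T' S, h.1]

lemma sum_inter_le {n k : ℕ} (S : Finset (Fin n)) (hS : S.card = k) (f : ℕ → ℝ)
    (hf : ∀ A, 0 ≤ f A) :
    ∑ T ∈ Finset.powersetCard k (Finset.univ : Finset (Fin n)), f (S ∩ T).card ≤
      ∑ A ∈ Finset.range (k + 1), (k.choose A : ℝ) * ((n - k).choose (k - A)) * f A := by
  rw [← Finset.sum_fiberwise_of_maps_to (t := Finset.range (k + 1))
    (g := fun T => (S ∩ T).card)]
  · refine Finset.sum_le_sum fun A _ => ?_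
    rw [Finset.sum_congr rfl (g := fun _ => f A)
      (fun T hT => by rw [(Finset.mem_filter.1 hT).2]), Finset.sum_const, nsmul_eq_mul]
    refine mul_le_mul_of_nonneg_right ?_ (hf A)
    exact_mod_cast card_inter_fiber_le S hS
  · intro T _
    rw [Finset.mem_range, Nat.lt_succ_iff, ← hS]
    exact Finset.card_le_card Finset.inter_subset_left

lemma cast_choose_three (n : ℕ) : (n.choose 3 : ℝ) = n * (n - 1) * (n - 2) / 6 := by
  induction n with
  | zero => simp
  | succ n ih =>
    rw [Nat.choose_succ_succ' n 2, Nat.cast_add, ih, Nat.cast_choose_two]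
    push_cast; ring

/-- Number of clauses satisfied by two assignments with `k` true variables out of `3k`, of which
`A` are common. -/
def pairCount (k A : ℕ) : ℕ := A * (k + A).choose 2 + (k - A) * ((k - A) * (k + A))

lemma pairCount_ratio_le {k A : ℕ} (hk : 1 ≤ k) (hA : A ≤ k) :
    (pairCount k A : ℝ) * ((3 * k).choose 3) / ((k * (2 * k).choose 2 : ℕ) : ℝ) ^ 2 ≤
      corr (A / k) * (1 + 1 / k) ^ 2 := by
  have hk' : (1 : ℝ) ≤ k := by exact_mod_cast hk
  have hk0 : (0 : ℝ) < k := by linarith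
  have hA' : (A : ℝ) ≤ k := by exact_mod_cast hA
  have hA0 : (0 : ℝ) ≤ A := by positivity
  have hc1 : 0 ≤ corr (A / k) := zero_le_one.trans (one_le_corr (by positivity))
  have hQ : (pairCount k A : ℝ) ≤ 8 / 9 * k ^ 3 * corr (A / k) := by
    have e : 8 / 9 * (k : ℝ) ^ 3 * corr (A / k)
        = A * (k + A) ^ 2 / 2 + (k - A) ^ 2 * (k + A) := by
      unfold corr; field_simp; ring
    rw [e]
    unfold pairCount
    rw [Nat.cast_add, Nat.cast_mul, Nat.cast_choose_two, Nat.cast_mul, Nat.cast_mul,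
      Nat.cast_sub hA]
    push_cast
    nlinarith [mul_nonneg hA0 (add_nonneg hk0.le hA0)]
  have hN : ((3 * k).choose 3 : ℝ) ≤ 9 / 2 * k ^ 3 := by
    rw [cast_choose_three]; push_cast; nlinarith
  have hP : ((k * (2 * k).choose 2 : ℕ) : ℝ) = k ^ 2 * (2 * k - 1) := by
    rw [Nat.cast_mul, Nat.cast_choose_two]; push_cast; ring
  have h21 : (k : ℝ) ≤ 2 * k - 1 := by linarith
  rw [hP]
  calc (pairCount k A : ℝ) * ((3 * k).choose 3) / (k ^ 2 * (2 * k - 1)) ^ 2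
      ≤ (8 / 9 * k ^ 3 * corr (A / k)) * (9 / 2 * k ^ 3) / (k ^ 2 * (2 * k - 1)) ^ 2 := by
        gcongr
    _ = corr (A / k) * (1 + 1 / (2 * k - 1)) ^ 2 := by
        obtain ⟨y, hy⟩ : ∃ y : ℝ, y = 2 * k - 1 := ⟨_, rfl⟩
        have hy0 : y ≠ 0 := by rw [hy]; linarith
        have hky : (k : ℝ) = (y + 1) / 2 := by rw [hy]; ring
        generalize corr (A / k) = g
        rw [← hy]
        field_simp
        rw [hky]
        ring
    _ ≤ corr (A / k) * (1 + 1 / k) ^ 2 := by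
        have : 0 < (2 * k - 1 : ℝ) := by linarith
        gcongr

lemma one_add_inv_pow_le {k m j : ℕ} (hk : 1 ≤ k) (hm : (m : ℝ) ≤ 41 / 25 * k) :
    ((1 + 1 / (k : ℝ)) ^ j) ^ m ≤ Real.exp (2 * j) := by
  have hk' : (1 : ℝ) ≤ k := by exact_mod_cast hk
  have hk0 : (0 : ℝ) < k := by linarith
  rw [← pow_mul]
  calc (1 + 1 / (k : ℝ)) ^ (j * m) ≤ Real.exp (1 / k) ^ (j * m) := by
        gcongr
        linarith [Real.add_one_le_exp (1 / (k : ℝ))]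
    _ = Real.exp (j * (m / k)) := by
        rw [← Real.exp_nat_mul]; congr 1; push_cast; ring
    _ ≤ Real.exp (2 * j) := by
        apply Real.exp_le_exp.2
        have : (m : ℝ) / k ≤ 2 := by rw [div_le_iff₀ hk0]; linarith
        nlinarith [(Nat.cast_nonneg j : (0 : ℝ) ≤ j)]

lemma card_formulas (n m : ℕ) :
    (Nat.card (Fin m → EC3Clause n) : ℝ) = (n.choose 3 : ℝ) ^ m := by
  rw [Nat.card_fun, card_clause]; simp

lemma clauseSat_indicator {n : ℕ} (S c : Finset (Fin n)) :
    ClauseSat (fun v => decide (v ∈ S)) c ↔ (c ∩ S).card = 1 := by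
  unfold ClauseSat
  simp [Finset.filter_mem_eq_inter]

/-- The case of `3k` variables, by the second moment method over assignments with `k` true
variables, encoded as the `k`-subsets of `Fin (3 * k)`. -/
lemma Psat_three_mul :
    ∃ δ : ℝ, 0 < δ ∧ ∀ k m : ℕ, 1 ≤ k → (m : ℝ) ≤ 41 / 25 * k → δ ≤ Psat (3 * k) m := by
  classical
  obtain ⟨K, hK, hsum⟩ := sum_hypWeight_le
  refine ⟨1 / (K * Real.exp 4), by positivity, fun k m hk hm => ?_⟩
  set I := Finset.powersetCard k (Finset.univ : Finset (Fin (3 * k))) with hI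
  have hIc : I.card = (3 * k).choose k := by
    rw [hI, Finset.card_powersetCard, Finset.card_univ, Fintype.card_fin]
  have hmem : ∀ S ∈ I, S.card = k := fun S hS => (Finset.mem_powersetCard.1 hS).2
  set G := Finset.univ.filter fun φ : Fin m → EC3Clause (3 * k) =>
    ∃ S ∈ I, ∀ t, ((φ t).1 ∩ S).card = 1 with hG
  have hsm : (∑ S ∈ I, ((Finset.univ.filter fun c : EC3Clause (3 * k) =>
        (c.1 ∩ S).card = 1).card : ℝ) ^ m) ^ 2 ≤
      (G.card : ℝ) * ∑ S ∈ I, ∑ T ∈ I, ((Finset.univ.filter fun c : EC3Clause (3 * k) =>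
        (c.1 ∩ S).card = 1 ∧ (c.1 ∩ T).card = 1).card : ℝ) ^ m := by
    convert second_moment (C := EC3Clause (3 * k)) m I (fun S c => (c.1 ∩ S).card = 1)
  set M : ℝ := ((3 * k).choose k : ℝ) with hM
  set N : ℝ := ((3 * k).choose 3 : ℝ) with hN
  set P : ℝ := ((k * (2 * k).choose 2 : ℕ) : ℝ) with hP
  have hM0 : 0 < M := by
    rw [hM]; exact_mod_cast Nat.choose_pos (by omega)
  have hN0 : 0 < N := by
    rw [hN]; exact_mod_cast Nat.choose_pos (by omega)
  have hP0 : 0 < P := by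
    rw [hP]; exact_mod_cast Nat.mul_pos hk (Nat.choose_pos (by omega))
  -- satisfiable formulas include those counted by the second moment
  have hcard : (G.card : ℝ) / N ^ m ≤ Psat (3 * k) m := by
    unfold Psat
    rw [card_formulas]
    gcongr
    rw [Nat.card_eq_fintype_card, Fintype.card_subtype]
    refine Finset.card_le_card fun φ hφ => ?_
    simp only [hG, Finset.mem_filter, Finset.mem_univ, true_and] at hφ ⊢
    obtain ⟨S, _, hS⟩ := hφ
    exact ⟨fun v => decide (v ∈ S), fun t => (clauseSat_indicator S _).2 (hS t)⟩
  refine le_trans ?_ hcard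
  have h1 : M * P ^ m ≤
      ∑ S ∈ I, ((Finset.univ.filter fun c : EC3Clause (3 * k) => (c.1 ∩ S).card = 1).card : ℝ) ^ m := by
    rw [hM, ← hIc, ← nsmul_eq_mul]
    refine Finset.card_nsmul_le_sum _ _ _ fun S hS => ?_
    rw [card_clause_filter (fun c => (c ∩ S).card = 1)]
    have := le_card_sat S
    rw [hmem S hS, show 3 * k - k = 2 * k by omega] at this
    rw [hP]
    gcongr
  have h2 : ∑ S ∈ I, ∑ T ∈ I, ((Finset.univ.filter fun c : EC3Clause (3 * k) =>
      (c.1 ∩ S).card = 1 ∧ (c.1 ∩ T).card = 1).card : ℝ) ^ m ≤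
      M * ∑ A ∈ Finset.range (k + 1),
        (k.choose A : ℝ) * ((2 * k).choose (k - A)) * (pairCount k A : ℝ) ^ m := by
    rw [hM, ← hIc, ← nsmul_eq_mul]
    refine Finset.sum_le_card_nsmul _ _ _ fun S hS => ?_
    have := sum_inter_le S (hmem S hS) (fun A => (pairCount k A : ℝ) ^ m) (fun A => by positivity)
    rw [show 3 * k - k = 2 * k by omega] at this
    refine le_trans (Finset.sum_le_sum fun T hT => ?_) this
    rw [card_clause_filter (fun c => (c ∩ S).card = 1 ∧ (c ∩ T).card = 1)]
    have hp := card_sat_pair_le S T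
    have a1 := Finset.card_sdiff_add_card_inter S T
    have a2 := Finset.card_sdiff_add_card_inter T S
    have a3 := Finset.card_union_add_card_inter S T
    have a4 := Finset.card_compl (S ∪ T)
    have a5 := Finset.card_le_univ (S ∪ T)
    rw [Finset.inter_comm T S] at a2
    rw [hmem S hS] at a1 a3
    rw [hmem T hT] at a2 a3
    rw [Fintype.card_fin] at a4 a5
    rw [show (S \ T).card = k - (S ∩ T).card by omega,
      show (T \ S).card = k - (S ∩ T).card by omega,
      show (S ∪ T)ᶜ.card = k + (S ∩ T).card by omega] at hp
    unfold pairCount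
    gcongr
  -- normalised second moment
  have h3 : N ^ m * ∑ A ∈ Finset.range (k + 1),
        (k.choose A : ℝ) * ((2 * k).choose (k - A)) * (pairCount k A : ℝ) ^ m ≤
      (K * Real.exp 4) * (M * (P ^ m) ^ 2) := by
    have hterm : ∀ A ∈ Finset.range (k + 1),
        N ^ m * ((k.choose A : ℝ) * ((2 * k).choose (k - A)) * (pairCount k A : ℝ) ^ m) ≤
          (M * (P ^ m) ^ 2 * Real.exp 4) * (hypWeight k A * corr (A / k) ^ m) := by
      intro A hA
      have hA : A ≤ k := by simpa [Nat.lt_succ_iff] using hA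
      have hr := pairCount_ratio_le hk hA
      rw [← hN, ← hP] at hr
      have hc1 : 0 ≤ corr (A / k) := zero_le_one.trans (one_le_corr (by positivity))
      have hw0 : 0 ≤ hypWeight k A := by unfold hypWeight; positivity
      have e : N ^ m * ((k.choose A : ℝ) * ((2 * k).choose (k - A)) * (pairCount k A : ℝ) ^ m)
          = M * (P ^ m) ^ 2 * (hypWeight k A * (pairCount k A * N / P ^ 2) ^ m) := by
        unfold hypWeight
        rw [← hM, div_pow, mul_pow, ← pow_mul, ← pow_mul, mul_comm 2 m]
        field_simp
      rw [e]
      have hpw : (pairCount k A * N / P ^ 2) ^ m ≤ corr (A / k) ^ m * Real.exp 4 := by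
        calc (pairCount k A * N / P ^ 2) ^ m ≤ (corr (A / k) * (1 + 1 / k) ^ 2) ^ m := by gcongr
          _ = corr (A / k) ^ m * ((1 + 1 / (k : ℝ)) ^ 2) ^ m := by rw [mul_pow]
          _ ≤ corr (A / k) ^ m * Real.exp 4 := by
            have := one_add_inv_pow_le (j := 2) hk hm
            norm_num at this
            norm_num
            gcongr
      calc M * (P ^ m) ^ 2 * (hypWeight k A * (pairCount k A * N / P ^ 2) ^ m)
          ≤ M * (P ^ m) ^ 2 * (hypWeight k A * (corr (A / k) ^ m * Real.exp 4)) := by gcongr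
        _ = _ := by ring
    rw [Finset.mul_sum]
    refine (Finset.sum_le_sum hterm).trans ?_
    rw [← Finset.mul_sum]
    calc (M * (P ^ m) ^ 2 * Real.exp 4) *
          ∑ A ∈ Finset.range (k + 1), hypWeight k A * corr (A / k) ^ m
        ≤ (M * (P ^ m) ^ 2 * Real.exp 4) * K := by
          gcongr
          exact hsum k m hk hm
      _ = _ := by ring
  have h4 : (M * P ^ m) ^ 2 ≤ G.card * (M * ∑ A ∈ Finset.range (k + 1),
        (k.choose A : ℝ) * ((2 * k).choose (k - A)) * (pairCount k A : ℝ) ^ m) := by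
    refine le_trans (pow_le_pow_left₀ (by positivity) h1 2) (hsm.trans ?_)
    gcongr
  rw [div_le_div_iff₀ (by positivity) (by positivity), one_mul]
  have h5 : M ^ 2 * (P ^ m) ^ 2 * N ^ m ≤ M ^ 2 * (P ^ m) ^ 2 * (G.card * (K * Real.exp 4)) := by
    calc M ^ 2 * (P ^ m) ^ 2 * N ^ m = (M * P ^ m) ^ 2 * N ^ m := by ring
      _ ≤ G.card * (M * ∑ A ∈ Finset.range (k + 1),
        (k.choose A : ℝ) * ((2 * k).choose (k - A)) * (pairCount k A : ℝ) ^ m) * N ^ m := by gcongr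
      _ = G.card * M * (N ^ m * ∑ A ∈ Finset.range (k + 1),
        (k.choose A : ℝ) * ((2 * k).choose (k - A)) * (pairCount k A : ℝ) ^ m) := by ring
      _ ≤ G.card * M * ((K * Real.exp 4) * (M * (P ^ m) ^ 2)) := by gcongr
      _ = _ := by ring
  exact le_of_mul_le_mul_left h5 (by positivity)

/-! ### Passing to an arbitrary number of variables -/

/-- A satisfiable formula stays satisfiable when unused variables are added. -/
lemma card_sat_mono {n n' : ℕ} (h : n ≤ n') (m : ℕ) :
    Nat.card {φ : Fin m → EC3Clause n // FormulaSatisfiable φ} ≤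
      Nat.card {φ : Fin m → EC3Clause n' // FormulaSatisfiable φ} := by
  set emb := Fin.castLEEmb h with hemb
  refine Nat.card_le_card_of_injective
    (fun φ => ⟨fun i => ⟨(φ.1 i).1.map emb, by rw [Finset.card_map]; exact (φ.1 i).2⟩, ?_⟩) ?_
  · obtain ⟨φ, σ, hσ⟩ := φ
    refine ⟨Function.extend emb σ (fun _ => false), fun i => ?_⟩
    have := hσ i
    unfold ClauseSat at this ⊢
    rw [Finset.filter_map, Finset.card_map]
    simpa [Function.comp_def, emb.injective.extend_apply] using this
  · intro φ ψ hφ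
    apply Subtype.ext
    funext i
    have := congrFun (congrArg Subtype.val hφ) i
    exact Subtype.ext (Finset.map_injective emb (congrArg Subtype.val this))

/-- If `r ≤ 0.546`, the probability that a random EC3 formula on `n` variables with
`⌊r n⌋` clauses is satisfiable is bounded away from 0 for large `n`. -/
theorem ec3_sat_positive_prob (r : ℝ) (hr : r ≤ 0.546) :
    ∃ δ : ℝ, 0 < δ ∧ ∀ᶠ n : ℕ in atTop, δ ≤ Psat n ⌊r * (n : ℝ)⌋₊ := by
  obtain ⟨δ, hδ, hmain⟩ := Psat_three_mul
  refine ⟨δ / Real.exp 6, by positivity, ?_⟩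
  filter_upwards [eventually_ge_atTop 1800] with n hn
  set m := ⌊r * (n : ℝ)⌋₊ with hm
  set k := n / 3 with hk
  have hk600 : 600 ≤ k := by omega
  have hle : 3 * k ≤ n := by omega
  have hlt : n ≤ 3 * k + 2 := by omega
  have hkr : (600 : ℝ) ≤ k := by exact_mod_cast hk600
  have hltr : (n : ℝ) ≤ 3 * k + 2 := by exact_mod_cast hlt
  have hler : 3 * (k : ℝ) ≤ n := by exact_mod_cast hle
  have hmk : (m : ℝ) ≤ 41 / 25 * k := by
    have h1 : (m : ℝ) ≤ 0.546 * n := by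
      calc (m : ℝ) ≤ (⌊0.546 * (n : ℝ)⌋₊ : ℝ) := by
            exact_mod_cast Nat.floor_mono (by gcongr)
        _ ≤ 0.546 * n := Nat.floor_le (by positivity)
    linarith
  have hP := hmain k m (by omega) hmk
  refine le_trans ?_ (?_ : Psat (3 * k) m / Real.exp 6 ≤ Psat n m)
  · gcongr
  -- the `m` clauses avoid the at most two extra variables with probability at least `exp (-6)`
  have hN0 : (0 : ℝ) < (3 * k).choose 3 := by exact_mod_cast Nat.choose_pos (by omega)
  have hN0' : (0 : ℝ) < n.choose 3 := by exact_mod_cast Nat.choose_pos (by omega)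
  have hratio : (n.choose 3 : ℝ) ≤ (1 + 1 / k) ^ 3 * (3 * k).choose 3 := by
    have hpos : (0 : ℝ) < k := by linarith
    have f : ∀ a : ℝ, 2 * k ≤ a → a + 2 ≤ (1 + 1 / k) * a := by
      intro a ha
      have : 2 ≤ 1 / k * a := by rw [div_mul_eq_mul_div, le_div_iff₀ hpos]; linarith
      linarith
    have f0 := f (3 * k) (by linarith)
    have f1 := f (3 * k - 1) (by linarith)
    have f2 := f (3 * k - 2) (by linarith)
    rw [cast_choose_three, cast_choose_three]
    push_cast
    have hn1 : (1800 : ℝ) ≤ n := by exact_mod_cast hn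
    calc (n : ℝ) * (n - 1) * (n - 2) / 6
        ≤ ((1 + 1 / k) * (3 * k)) * ((1 + 1 / k) * (3 * k - 1)) * ((1 + 1 / k) * (3 * k - 2)) / 6 := by
          have : (0 : ℝ) ≤ n - 1 := by linarith
          have : (0 : ℝ) ≤ n - 2 := by linarith
          have : (0 : ℝ) ≤ 3 * k - 1 := by linarith
          gcongr <;> linarith
      _ = _ := by ring
  have hpow : (n.choose 3 : ℝ) ^ m ≤ Real.exp 6 * ((3 * k).choose 3 : ℝ) ^ m := by
    calc (n.choose 3 : ℝ) ^ m ≤ ((1 + 1 / k) ^ 3 * ((3 * k).choose 3 : ℝ)) ^ m := by gcongr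
      _ = ((1 + 1 / (k : ℝ)) ^ 3) ^ m * ((3 * k).choose 3 : ℝ) ^ m := by rw [mul_pow]
      _ ≤ Real.exp 6 * ((3 * k).choose 3 : ℝ) ^ m := by
          have := one_add_inv_pow_le (j := 3) (by omega) hmk
          norm_num at this
          norm_num
          gcongr
  unfold Psat
  rw [card_formulas, card_formulas, div_div]
  refine div_le_div₀ (by positivity) ?_ (by positivity) (by linarith)
  exact_mod_cast card_sat_mono hle m
end

section
/- Suppose there exists a (uniform) satisfiability threshold r* for random EC3 formulas, i.e., a constant r* > 0 such that for every fixed r, a random EC3 formula on n variables with ⌊rn⌋ clauses is satisfiable with probability tending to 1 as n → ∞ whenever r < r*, and with probability tending to 0 whenever r > r*. Then r* ≥ 0.546. -/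
/-!
A threshold below `0.546` would make the satisfiability probability at density `0.546` tend to `0`,
so it suffices to bound `Psat n ⌊0.546 n⌋` away from `0`. The bound comes from an assignment
procedure that never backtracks, analysed by a potential function.

Assigning variables one at a time turns clauses into constraints of a few kinds (`Kind`): exactly-one
constraints on at most three variables and all-false constraints on at most two. Given the
kinds, the constraints stay independent and uniform on the remaining variables. So if `PP n κ` is
the satisfiability probability of random constraints of the kinds `κ`, then giving a value to a
variable of some constraint bounds `PP (n + 1)` below by an average of `PP n` (`step_cons_le_PP`),
in which each other constraint of size `j` is hit with probability `j / (n + 1)`, independently.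

The procedure first satisfies constraints that force variables (`e1`, `z1`, `z2`), and otherwise
sets to true a variable of an `e2` constraint, or of an `e3` constraint if there is no other. With a
fraction `s` of the variables left, about `0.546 s ^ 3 N` constraints are of kind `e3`, and at most
about `s D(s) N` variable occurrences lie outside them. A variable set to true forces about
`A(s) = 6 * 0.546 s ^ 2 + D(s)` others to false, and one set to false forces about `D(s)` others to
true, so forced variables form a two-type branching process, subcritical because `D(s) A(s) < 1`
(`D_mul_A`); the density `0.546` is just small enough for this. Hence each round of forced steps is
short, and a contradiction has probability `O(1 / N)` per round.

The potential `Phi` makes this rigorous without concentration inequalities. Its main term is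
`HH * (1 - KK / N * E)`, where `E` is an exponential functional of the forced variables that
contracts in forced steps and so pays for possible contradictions (`forced`), while `HH` grows
enough to pay for the free steps (`free`). Subtracted from it are three exponential functionals,
for the `e3` constraints, all occurrences, and the occurrences outside `e3` constraints. Each is a
supermartingale, up to an exponentially small increase of the last one in free steps on an `e3`
constraint, and exceeds `1` as soon as the quantity it controls leaves its range. So `Phi` does not
decrease on average (`Phi_le_Step`), it is nonpositive when about a tenth of the variables is left
(`Phi_base`), and it is at most `1` when only satisfied empty constraints remain; by induction
`Phi ≤ PP` (`Phi_le_PP`). For the initial formula `Phi` is at least `exp (-CC) / 2` (`Phi_start`).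
-/

open Filter Topology

namespace EC3

open Finset

/-! ### Random constraints and the exposure of one variable -/

/-- The kinds of constraint met while variables are being assigned. `e3`, `e2`, `e1`: exactly one
variable of a 3-, 2-, 1-element set is true; `z2`, `z1`: all variables of a 2-, 1-element set are
false; `ok`: the empty, satisfied constraint; `b1`, `b0`: violated constraints, with one or no
variable left. -/
inductive Kind
  | e3 | e2 | e1 | z2 | z1 | ok | b1 | b0
  deriving DecidableEq

open Kind

/-- The number of variables in a constraint of a given kind. -/
def size : Kind → ℕ
  | e3 => 3 | e2 => 2 | e1 => 1 | z2 => 2 | z1 => 1 | ok => 0 | b1 => 1 | b0 => 0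

/-- The kind of what is left of a constraint once one of its variables is given the value `β`. -/
def hit : Bool → Kind → Kind
  | true, e3 => z2 | true, e2 => z1 | true, e1 => ok | true, z2 => b1 | true, z1 => b0
  | false, e3 => e2 | false, e2 => e1 | false, e1 => b0 | false, z2 => z1 | false, z1 => ok
  | _, ok => ok | _, b1 => b0 | _, b0 => b0

lemma size_hit (β : Bool) (k : Kind) : size (hit β k) = size k - 1 := by
  cases β <;> cases k <;> rfl

/-- The assignment `σ` satisfies the constraint of kind `k` on the variable set `S`. -/
def Sat {n : ℕ} (k : Kind) (S : Finset (Fin n)) (σ : Fin n → Bool) : Prop :=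
  match k with
  | e3 | e2 | e1 => (S.filter fun v => σ v = true).card = 1
  | z2 | z1 | ok => (S.filter fun v => σ v = true).card = 0
  | b1 | b0 => False

/-- The average of `h` over the `k`-element subsets of `Fin n`. -/
noncomputable def avg (n k : ℕ) (h : Finset (Fin n) → ℝ) : ℝ :=
  (∑ S ∈ powersetCard k (univ : Finset (Fin n)), h S) / (n.choose k : ℝ)

open Classical in
/-- The probability that independent uniformly random constraints on `Fin n`, of the kinds in the
list, are simultaneously satisfied by some assignment satisfying `acc`. -/
noncomputable def PP (n : ℕ) : List Kind → ((Fin n → Bool) → Prop) → ℝ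
  | [], acc => if ∃ σ, acc σ then 1 else 0
  | k :: κ, acc => avg n (size k) fun S => PP n κ fun σ => acc σ ∧ Sat k S σ

/-- The expectation of `G` after one variable is given the value `β`: independently, each constraint
contains that variable with probability `q` times its size, and is then replaced by `hit β`. -/
noncomputable def Step (β : Bool) (q : ℝ) : List Kind → (List Kind → ℝ) → ℝ
  | [], G => G []
  | k :: κ, G => (1 - size k * q) * Step β q κ (fun κ' => G (k :: κ')) +
      size k * q * Step β q κ (fun κ' => G (hit β k :: κ'))

lemma avg_mono {n k : ℕ} {h h' : Finset (Fin n) → ℝ}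
    (H : ∀ S, S.card = k → h S ≤ h' S) : avg n k h ≤ avg n k h' := by
  unfold avg
  gcongr with S hS
  exact H S (mem_powersetCard.1 hS).2

lemma avg_congr {n k : ℕ} {h h' : Finset (Fin n) → ℝ}
    (H : ∀ S, S.card = k → h S = h' S) : avg n k h = avg n k h' :=
  le_antisymm (avg_mono fun S hS => (H S hS).le) (avg_mono fun S hS => (H S hS).ge)

lemma avg_const {n k : ℕ} (hk : k ≤ n) (c : ℝ) : avg n k (fun _ => c) = c := by
  unfold avg
  have : (0 : ℝ) < n.choose k := by exact_mod_cast Nat.choose_pos hk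
  simp only [sum_const, card_powersetCard, card_univ, Fintype.card_fin, nsmul_eq_mul]
  field_simp

lemma PP_nonneg {n : ℕ} (κ : List Kind) (acc : (Fin n → Bool) → Prop) : 0 ≤ PP n κ acc := by
  induction κ generalizing acc with
  | nil => unfold PP; split_ifs <;> norm_num
  | cons k κ ih =>
    unfold PP avg
    exact div_nonneg (sum_nonneg fun S _ => ih _) (by positivity)

lemma Step_mono {β : Bool} {q : ℝ} (hq : 0 ≤ q) (hq3 : 3 * q ≤ 1) (κ : List Kind)
    {G G' : List Kind → ℝ} (h : ∀ κ, G κ ≤ G' κ) : Step β q κ G ≤ Step β q κ G' := by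
  induction κ generalizing G G' with
  | nil => exact h _
  | cons k κ ih =>
    unfold Step
    have h1 : (0 : ℝ) ≤ 1 - size k * q := by
      cases k <;> simp only [size] <;> push_cast <;> linarith
    have h2 : (0 : ℝ) ≤ size k * q := by positivity
    exact add_le_add (mul_le_mul_of_nonneg_left (ih fun _ => h _) h1)
      (mul_le_mul_of_nonneg_left (ih fun _ => h _) h2)

lemma Step_sub {β : Bool} {q : ℝ} (κ : List Kind) (G G' : List Kind → ℝ) :
    Step β q κ (fun κ => G κ - G' κ) = Step β q κ G - Step β q κ G' := by
  induction κ generalizing G G' with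
  | nil => rfl
  | cons k κ ih => unfold Step; rw [ih, ih]; ring

lemma Step_add {β : Bool} {q : ℝ} (κ : List Kind) (G G' : List Kind → ℝ) :
    Step β q κ (fun κ => G κ + G' κ) = Step β q κ G + Step β q κ G' := by
  induction κ generalizing G G' with
  | nil => rfl
  | cons k κ ih => unfold Step; rw [ih, ih]; ring

lemma Step_mul {β : Bool} {q : ℝ} (κ : List Kind) (c : ℝ) (G : List Kind → ℝ) :
    Step β q κ (fun κ => c * G κ) = c * Step β q κ G := by
  induction κ generalizing G with
  | nil => rfl
  | cons k κ ih => unfold Step; rw [ih, ih]; ring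

lemma Step_sum {β : Bool} {q : ℝ} {ι : Type*} (s : Finset ι) (κ : List Kind)
    (G : ι → List Kind → ℝ) :
    Step β q κ (fun κ => ∑ i ∈ s, G i κ) = ∑ i ∈ s, Step β q κ (G i) := by
  classical
  induction s using Finset.induction_on with
  | empty =>
    have := Step_mul (β := β) (q := q) κ 0 (fun _ => 0)
    simpa using this
  | insert a s ha ih => simp only [sum_insert ha]; rw [Step_add, ih]

lemma Step_avg {β : Bool} {q : ℝ} {n k : ℕ} (κ : List Kind)
    (G : Finset (Fin n) → List Kind → ℝ) :
    Step β q κ (fun κ => avg n k fun S => G S κ) = avg n k fun S => Step β q κ (G S) := by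
  unfold avg
  simp only [div_eq_inv_mul]
  rw [Step_mul, Step_sum]

/-- The average over the subsets of `Fin (n + 1)` splits by whether the subset contains `0`. -/
lemma avg_succ {n k : ℕ} (hk : k ≤ n) (h : Finset (Fin (n + 1)) → ℝ) :
    avg (n + 1) k h =
      (1 - k * (1 / ((n : ℝ) + 1))) * avg n k (fun S => h (S.map (Fin.succEmb n))) +
      k * (1 / ((n : ℝ) + 1)) *
        avg n (k - 1) (fun S => h (insert 0 (S.map (Fin.succEmb n)))) := by
  rcases k with _ | k
  · simp [avg]
  have huniv : (univ : Finset (Fin (n + 1))) = insert 0 (univ.map (Fin.succEmb n)) := by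
    rw [Fin.univ_succ, cons_eq_insert]; rfl
  have hnot : (0 : Fin (n + 1)) ∉ univ.map (Fin.succEmb n) := by
    simp
  have hsum : ∑ S ∈ powersetCard (k + 1) (univ : Finset (Fin (n + 1))), h S =
      ∑ S ∈ powersetCard (k + 1) (univ : Finset (Fin n)), h (S.map (Fin.succEmb n)) +
      ∑ S ∈ powersetCard k (univ : Finset (Fin n)), h (insert 0 (S.map (Fin.succEmb n))) := by
    rw [huniv, powersetCard_succ_insert hnot, sum_union]
    · congr 1
      · rw [powersetCard_map, sum_map]; rfl
      · rw [powersetCard_map, sum_image, sum_map]; · rfl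
        intro S hS T hT hST
        simp only [coe_map, Set.mem_image, mem_coe, mem_powersetCard] at hS hT
        obtain ⟨S, -, rfl⟩ := hS
        obtain ⟨T, -, rfl⟩ := hT
        have h0 : ∀ U : Finset (Fin n), (0 : Fin (n + 1)) ∉ U.map (Fin.succEmb n) := by
          intro U; simp
        have := congrArg (fun U => U.erase 0) hST
        simp only [mapEmbedding_apply, RelEmbedding.coe_toEmbedding] at this
        simpa [erase_insert (h0 _)] using this
    · rw [Finset.disjoint_left]
      intro S hS hS'
      simp only [mem_image] at hS'
      obtain ⟨T, -, rfl⟩ := hS'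
      have := (mem_powersetCard.1 hS).1 (mem_insert_self 0 T)
      exact hnot this
  unfold avg
  rw [hsum]
  have c1 : (0 : ℝ) < n.choose (k + 1) := by exact_mod_cast Nat.choose_pos hk
  have c2 : (0 : ℝ) < n.choose k := by exact_mod_cast Nat.choose_pos (by omega : k ≤ n)
  have c3 : (0 : ℝ) < (n + 1).choose (k + 1) := by
    exact_mod_cast Nat.choose_pos (by omega : k + 1 ≤ n + 1)
  have e1 : ((n + 1).choose (k + 1) : ℝ) * (k + 1) = (n + 1) * n.choose k := by
    exact_mod_cast (Nat.add_one_mul_choose_eq n k).symm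
  have e2 : ((n + 1).choose (k + 1) : ℝ) = n.choose k + n.choose (k + 1) := by
    exact_mod_cast Nat.choose_succ_succ n k
  have f2 : ((k + 1 : ℕ) : ℝ) * (1 / ((n : ℝ) + 1)) = n.choose k / (n + 1).choose (k + 1) := by
    push_cast
    rw [mul_one_div, div_eq_div_iff (by positivity) c3.ne']
    linarith
  have f1 : 1 - ((k + 1 : ℕ) : ℝ) * (1 / ((n : ℝ) + 1)) =
      n.choose (k + 1) / (n + 1).choose (k + 1) := by
    rw [f2, e2]; field_simp; ring
  rw [f1, f2, Nat.add_sub_cancel]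
  field_simp

lemma Sat_map {n : ℕ} (β : Bool) (k : Kind) (S : Finset (Fin n)) (τ : Fin n → Bool) :
    Sat k (S.map (Fin.succEmb n)) (Fin.cons β τ) ↔ Sat k S τ := by
  have : ((S.map (Fin.succEmb n)).filter
      fun v => (Fin.cons β τ : Fin (n + 1) → Bool) v = true).card =
      (S.filter fun v => τ v = true).card := by
    rw [filter_map, card_map]
    congr 1
  cases k <;> simp only [Sat, this]

lemma Sat_insert {n : ℕ} (β : Bool) (k : Kind) (S : Finset (Fin n)) (τ : Fin n → Bool)
    (hk : size k ≠ 0) (hS : S.card = size k - 1) :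
    Sat k (insert 0 (S.map (Fin.succEmb n))) (Fin.cons β τ) ↔ Sat (hit β k) S τ := by
  have h0 : (0 : Fin (n + 1)) ∉ (S.map (Fin.succEmb n)).filter
      fun v => (Fin.cons β τ : Fin (n + 1) → Bool) v = true := by
    simp
  have : ((insert 0 (S.map (Fin.succEmb n))).filter
      fun v => (Fin.cons β τ : Fin (n + 1) → Bool) v = true).card =
      (S.filter fun v => τ v = true).card + (if β = true then 1 else 0) := by
    have e : ((S.map (Fin.succEmb n)).filter
      fun v => (Fin.cons β τ : Fin (n + 1) → Bool) v = true).card =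
      (S.filter fun v => τ v = true).card := by
      rw [filter_map, card_map]
      congr 1
    rw [filter_insert]
    by_cases hb : β = true
    · simp only [Fin.cons_zero, hb, if_true] at h0 ⊢
      rw [card_insert_of_notMem h0]
      subst hb
      rw [e]
    · have hb' : β = false := by simpa using hb
      subst hb'
      simpa using e
  have hle := card_filter_le S (fun v => τ v = true)
  cases β <;> cases k <;> simp only [size, hit, Sat, this, ne_eq, not_true_eq_false] at * <;>
    (simp at hS; simp [hS])

/-- Exposing variable `0`, with value `β`, in all constraints. -/
lemma step_le_PP {n : ℕ} (hn : 3 ≤ n) (β : Bool) (κ : List Kind)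
    (acc : (Fin (n + 1) → Bool) → Prop) :
    Step β (1 / ((n : ℝ) + 1)) κ (fun κ' => PP n κ' fun τ => acc (Fin.cons β τ)) ≤
      PP (n + 1) κ acc := by
  induction κ generalizing acc with
  | nil =>
    simp only [Step, PP]
    by_cases h1 : ∃ τ : Fin n → Bool, acc (Fin.cons β τ)
    · obtain ⟨τ, hτ⟩ := h1
      rw [if_pos ⟨τ, hτ⟩, if_pos ⟨_, hτ⟩]
    · rw [if_neg h1]; split_ifs <;> norm_num
  | cons k κ ih =>
    have hk : size k ≤ n := by cases k <;> simp only [size] <;> omega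
    rw [show PP (n + 1) (k :: κ) acc = avg (n + 1) (size k) fun S =>
      PP (n + 1) κ fun σ => acc σ ∧ Sat k S σ from rfl, avg_succ hk]
    unfold Step
    have hq : (0 : ℝ) ≤ size k * (1 / ((n : ℝ) + 1)) := by positivity
    have hq' : (0 : ℝ) ≤ 1 - size k * (1 / ((n : ℝ) + 1)) := by
      have : (size k : ℝ) ≤ n := by exact_mod_cast hk
      rw [sub_nonneg, mul_one_div, div_le_one (by positivity)]
      linarith
    refine add_le_add (mul_le_mul_of_nonneg_left ?_ hq') ?_
    · rw [show (fun κ' => PP n (k :: κ') fun τ => acc (Fin.cons β τ)) = fun κ' =>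
        avg n (size k) fun S => PP n κ' fun τ => acc (Fin.cons β τ) ∧ Sat k S τ from rfl, Step_avg]
      refine avg_mono fun S _ => le_trans (le_of_eq ?_) (ih _)
      simp only [Sat_map]
    · rcases Nat.eq_zero_or_pos (size k) with h0 | h0
      · simp [h0]
      refine mul_le_mul_of_nonneg_left ?_ hq
      rw [show (fun κ' => PP n (hit β k :: κ') fun τ => acc (Fin.cons β τ)) = fun κ' =>
        avg n (size (hit β k)) fun S => PP n κ' fun τ => acc (Fin.cons β τ) ∧ Sat (hit β k) S τ
        from rfl, Step_avg, size_hit]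
      refine avg_mono fun S hS => le_trans (le_of_eq ?_) (ih _)
      simp only [Sat_insert β k S _ h0.ne' hS]

lemma PP_congr {n : ℕ} (κ : List Kind) {acc acc' : (Fin n → Bool) → Prop}
    (h : ∀ σ, acc σ ↔ acc' σ) : PP n κ acc = PP n κ acc' := by
  rw [show acc = acc' from funext fun σ => propext (h σ)]

lemma PP_perm {n : ℕ} {κ κ' : List Kind} (h : κ.Perm κ') (acc : (Fin n → Bool) → Prop) :
    PP n κ acc = PP n κ' acc := by
  induction h generalizing acc with
  | nil => rfl
  | cons k _ ih => unfold PP; simp only [ih]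
  | swap k k' κ =>
    unfold PP PP avg
    simp only [Finset.sum_div]
    rw [sum_comm]
    refine sum_congr rfl fun S _ => sum_congr rfl fun T _ => ?_
    rw [div_right_comm]
    congr 2
    exact PP_congr _ fun σ => by tauto
  | trans _ _ ih1 ih2 => rw [ih1, ih2]

lemma avg_equiv {n k : ℕ} (e : Fin n ≃ Fin n) (h : Finset (Fin n) → ℝ) :
    avg n k (fun S => h (S.map e.toEmbedding)) = avg n k h := by
  unfold avg
  congr 1
  refine sum_bij' (fun S _ => S.map e.toEmbedding) (fun S _ => S.map e.symm.toEmbedding)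
    ?_ ?_ ?_ ?_ ?_
  · intro S hS; simpa [mem_powersetCard] using hS
  · intro S hS; simpa [mem_powersetCard] using hS
  · intro S _; ext x; simp
  · intro S _; ext x; simp
  · intro S _; rfl

lemma Sat_equiv {n : ℕ} (e : Fin n ≃ Fin n) (k : Kind) (S : Finset (Fin n)) (σ : Fin n → Bool) :
    Sat k (S.map e.toEmbedding) σ ↔ Sat k S (σ ∘ e) := by
  have : ((S.map e.toEmbedding).filter fun v => σ v = true).card =
      (S.filter fun v => (σ ∘ e) v = true).card := by
    rw [filter_map, card_map]; congr 1
  cases k <;> simp only [Sat, this]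

lemma PP_equiv {n : ℕ} (e : Fin n ≃ Fin n) (κ : List Kind) (acc : (Fin n → Bool) → Prop) :
    PP n κ (fun σ => acc (σ ∘ e)) = PP n κ acc := by
  induction κ generalizing acc with
  | nil =>
    unfold PP
    congr 1
    refine propext ⟨fun ⟨σ, h⟩ => ⟨_, h⟩, fun ⟨σ, h⟩ => ⟨σ ∘ e.symm, ?_⟩⟩
    simpa [Function.comp_assoc] using h
  | cons k κ ih =>
    unfold PP
    rw [← avg_equiv e]
    congr 1; funext S
    simp only [Sat_equiv]
    exact ih fun σ => acc σ ∧ Sat k S σ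

/-- Since all variables are alike, a random constraint may be assumed to contain variable `0`;
that variable is then exposed with value `β`. -/
lemma step_cons_le_PP {n : ℕ} (hn : 3 ≤ n) (β : Bool) (k : Kind) (hk : size k ≠ 0)
    (κ : List Kind) :
    Step β (1 / ((n : ℝ) + 1)) κ (fun κ' => PP n (hit β k :: κ') fun _ => True) ≤
      PP (n + 1) (k :: κ) fun _ => True := by
  have hkn : size k ≤ n := by cases k <;> simp only [size] <;> omega
  set F : Finset (Fin (n + 1)) → ℝ := fun S => PP (n + 1) κ fun σ => True ∧ Sat k S σ with hF
  have hsymm : ∀ S T : Finset (Fin (n + 1)), S.card = T.card → F S = F T := by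
    intro S T hST
    obtain ⟨e, he⟩ : ∃ e : Fin (n + 1) ≃ Fin (n + 1), S.map e.toEmbedding = T := by
      obtain ⟨e0⟩ : Nonempty ((S : Set (Fin (n+1))) ≃ (T : Set (Fin (n+1)))) := by
        exact ⟨Finset.equivOfCardEq hST⟩
      refine ⟨Equiv.extendSubtype (p := fun x => x ∈ S) (q := fun x => x ∈ T)
        (Finset.equivOfCardEq hST), ?_⟩
      apply Finset.eq_of_subset_of_card_le
      · intro x hx
        obtain ⟨y, hy, rfl⟩ := mem_map.1 hx
        exact Equiv.extendSubtype_mem _ y hy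
      · simp [hST]
    rw [← he, hF]
    simp only [Sat_equiv]
    exact (PP_equiv e κ fun σ => True ∧ Sat k S σ).symm
  -- a subset of the right size through which `F` is evaluated
  obtain ⟨S0, hS0⟩ : ∃ S0 : Finset (Fin (n + 1)), S0.card = size k := by
    obtain ⟨S0, -, h⟩ := Finset.exists_subset_card_eq
      (s := (univ : Finset (Fin (n + 1)))) (n := size k) (by simp; omega)
    exact ⟨S0, h⟩
  have h1 : PP (n + 1) (k :: κ) (fun _ => True) = F S0 := by
    rw [show PP (n + 1) (k :: κ) (fun _ => True) = avg (n + 1) (size k) F from rfl,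
      avg_congr (h' := fun _ => F S0) fun S hS => hsymm S S0 (hS.trans hS0.symm),
      avg_const (by omega)]
  have h2 : F S0 = avg n (size k - 1) fun S => F (insert 0 (S.map (Fin.succEmb n))) := by
    rw [avg_congr (h' := fun _ => F S0), avg_const (by omega)]
    intro S hS
    apply hsymm
    rw [card_insert_of_notMem (by simp), card_map, hS, hS0]
    omega
  rw [h1, h2, show (fun κ' => PP n (hit β k :: κ') fun _ => True) = fun κ' =>
        avg n (size (hit β k)) fun S => PP n κ' fun τ => True ∧ Sat (hit β k) S τ
        from rfl, Step_avg, size_hit]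
  refine avg_mono fun S hS => le_trans (le_of_eq ?_) (step_le_PP hn β κ _)
  simp only [Sat_insert β k S _ hk hS]

/-- Constraints without variables that are not violated can all be satisfied. -/
lemma PP_ok {n : ℕ} (κ : List Kind) (hκ : ∀ k ∈ κ, k = ok) : PP n κ (fun _ => True) = 1 := by
  have key : ∀ (κ : List Kind), (∀ k ∈ κ, k = ok) → ∀ acc : (Fin n → Bool) → Prop, (∀ σ, acc σ) →
      PP n κ acc = 1 := by
    intro κ
    induction κ with
    | nil =>
      intro _ acc h
      unfold PP
      rw [if_pos ⟨fun _ => true, h _⟩]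
    | cons k κ ih =>
      intro hκ acc h
      obtain rfl := hκ k (by simp)
      unfold PP
      rw [avg_congr (h' := fun _ => 1), avg_const (by simp [size])]
      intro S hS
      refine ih (fun k hk => hκ k (by simp [hk])) _ fun σ => ⟨h σ, ?_⟩
      have : S = ∅ := by simpa [size] using hS
      subst this
      simp [Sat]
  exact key κ hκ _ fun _ => trivial

/-- The satisfiability probability of a random EC3 formula, as a list probability. -/
lemma PP_replicate (n m : ℕ) : PP n (List.replicate m e3) (fun _ => True) = Psat n m := by
  classical
  have : Fintype (EC3Clause n) := inferInstanceAs (Fintype {c : Finset (Fin n) // c.card = 3})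
  have hcard : Fintype.card (EC3Clause n) = n.choose 3 := by
    rw [show Fintype.card (EC3Clause n) = Fintype.card {c : Finset (Fin n) // c.card = 3} from
      Fintype.card_congr (Equiv.refl _)]
    rw [Fintype.card_finset_len, Fintype.card_fin]
  have key : ∀ (m : ℕ) (acc : (Fin n → Bool) → Prop),
      PP n (List.replicate m e3) acc =
        (∑ φ : Fin m → EC3Clause n,
          if ∃ σ, acc σ ∧ ∀ i, ClauseSat σ (φ i).1 then (1 : ℝ) else 0) / (n.choose 3 : ℝ) ^ m := by
    intro m
    induction m with
    | zero => intro acc; simp [PP]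
    | succ m ih =>
      intro acc
      rw [List.replicate_succ]
      unfold PP avg
      simp only [ih, size]
      rw [← (Fin.consEquiv fun _ => EC3Clause n).sum_comp, Fintype.sum_prod_type]
      rw [← Finset.sum_div, div_div, pow_succ]
      congr 1
      rw [← Finset.sum_coe_sort]
      let e : {x // x ∈ powersetCard 3 (univ : Finset (Fin n))} ≃ EC3Clause n :=
        Equiv.subtypeEquivRight fun c => by simp [mem_powersetCard]
      rw [← e.sum_comp]
      refine Finset.sum_congr rfl fun S _ => Finset.sum_congr rfl fun φ _ => ?_
      congr 1
      refine propext (exists_congr fun σ => ?_)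
      rw [Fin.forall_fin_succ]
      simp only [Fin.consEquiv_apply, Fin.cons_zero, Fin.cons_succ, and_assoc]
      rfl
  rw [key]
  unfold Psat
  rw [Nat.card_eq_fintype_card, Nat.card_eq_fintype_card, Fintype.card_fun, Fintype.card_fin, hcard,
    Fintype.card_subtype, Finset.natCast_card_filter]
  push_cast
  congr 1
  refine Finset.sum_congr rfl fun φ _ => ?_
  simp only [FormulaSatisfiable, true_and]
  congr 1

/-! ### Multiplicative and additive functionals of a list of constraints -/

/-- The product of the weights `w` over the list. -/
noncomputable def M (w : Kind → ℝ) (κ : List Kind) : ℝ := (κ.map w).prod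

/-- The sum of the weights `c` over the list. -/
noncomputable def Lin (c : Kind → ℝ) (κ : List Kind) : ℝ := (κ.map c).sum

/-- The weight whose product is the expectation of `M w` after a step. -/
noncomputable def stepw (β : Bool) (q : ℝ) (w : Kind → ℝ) (k : Kind) : ℝ :=
  (1 - size k * q) * w k + size k * q * w (hit β k)

lemma M_cons (w : Kind → ℝ) (k : Kind) (κ : List Kind) : M w (k :: κ) = w k * M w κ := by
  simp [M]

lemma Lin_cons (c : Kind → ℝ) (k : Kind) (κ : List Kind) : Lin c (k :: κ) = c k + Lin c κ := by
  simp [Lin]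

lemma M_perm {κ κ' : List Kind} (h : κ.Perm κ') (w : Kind → ℝ) : M w κ = M w κ' :=
  (h.map w).prod_eq

lemma M_nonneg {w : Kind → ℝ} (hw : ∀ k, 0 ≤ w k) (κ : List Kind) : 0 ≤ M w κ := by
  induction κ with
  | nil => simp [M]
  | cons k κ ih => rw [M_cons]; exact mul_nonneg (hw k) ih

lemma Step_M (β : Bool) (q : ℝ) (w : Kind → ℝ) (κ : List Kind) :
    Step β q κ (M w) = M (stepw β q w) κ := by
  induction κ with
  | nil => rfl
  | cons k κ ih =>
    unfold Step
    simp only [M_cons, Step_mul, ih, stepw]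
    ring

lemma M_le_exp {w w' c : Kind → ℝ} (κ : List Kind) (h0 : ∀ k, 0 ≤ w k)
    (h : ∀ k, w k ≤ w' k * Real.exp (c k)) :
    M w κ ≤ M w' κ * Real.exp (Lin c κ) := by
  induction κ with
  | nil => simp [M, Lin]
  | cons k κ ih =>
    rw [M_cons, M_cons, Lin_cons, Real.exp_add]
    calc w k * M w κ ≤ (w' k * Real.exp (c k)) * (M w' κ * Real.exp (Lin c κ)) :=
          mul_le_mul (h k) ih (M_nonneg h0 κ) ((h0 k).trans (h k))
      _ = _ := by ring

lemma M_mono {w w' : Kind → ℝ} (κ : List Kind) (h0 : ∀ k, 0 ≤ w k)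
    (h : ∀ k, w k ≤ w' k) : M w κ ≤ M w' κ := by
  have := M_le_exp (c := fun _ => 0) (w' := w') κ h0 (by simpa using h)
  simpa [Lin] using this

lemma exp_Lin_le_M {w c : Kind → ℝ} (κ : List Kind) (h : ∀ k, Real.exp (c k) ≤ w k) :
    Real.exp (Lin c κ) ≤ M w κ := by
  induction κ with
  | nil => simp [M, Lin]
  | cons k κ ih =>
    rw [M_cons, Lin_cons, Real.exp_add]
    exact mul_le_mul (h k) ih (Real.exp_pos _).le ((Real.exp_pos _).le.trans (h k))

lemma Lin_nonneg {c : Kind → ℝ} (κ : List Kind) (h : ∀ k, 0 ≤ c k) : 0 ≤ Lin c κ := by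
  induction κ with
  | nil => simp [Lin]
  | cons k κ ih => rw [Lin_cons]; exact add_nonneg (h k) ih

lemma Lin_mono {c c' : Kind → ℝ} (κ : List Kind) (h : ∀ k, c k ≤ c' k) : Lin c κ ≤ Lin c' κ := by
  induction κ with
  | nil => simp [Lin]
  | cons k κ ih => rw [Lin_cons, Lin_cons]; exact add_le_add (h k) ih

lemma Lin_mul (a : ℝ) (c : Kind → ℝ) (κ : List Kind) :
    Lin (fun k => a * c k) κ = a * Lin c κ := by
  induction κ with
  | nil => simp [Lin]
  | cons k κ ih => rw [Lin_cons, Lin_cons, ih]; ring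

lemma Lin_add (c c' : Kind → ℝ) (κ : List Kind) :
    Lin (fun k => c k + c' k) κ = Lin c κ + Lin c' κ := by
  induction κ with
  | nil => simp [Lin]
  | cons k κ ih => rw [Lin_cons, Lin_cons, Lin_cons, ih]; ring

lemma Lin_ind (k0 : Kind) (a : ℝ) (κ : List Kind) :
    Lin (fun k => if k = k0 then a else 0) κ = a * κ.count k0 := by
  induction κ with
  | nil => simp [Lin]
  | cons k κ ih =>
    rw [Lin_cons, ih, List.count_cons]
    by_cases h : k = k0
    · simp [h]; ring
    · simp [h]

/-- The union bound: a product of factors `w k ∈ [0, 1]` is at least `1` minus the sum of the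
defects. -/
lemma one_sub_Lin_le_M {w c : Kind → ℝ} (κ : List Kind) (h0 : ∀ k ∈ κ, 0 ≤ w k)
    (h1 : ∀ k ∈ κ, w k ≤ 1) (h : ∀ k ∈ κ, 1 - c k ≤ w k) :
    1 - Lin c κ ≤ M w κ ∧ 0 ≤ M w κ ∧ M w κ ≤ 1 := by
  induction κ with
  | nil => simp [M, Lin]
  | cons k κ ih =>
    obtain ⟨a, b, d⟩ := ih (fun k hk => h0 k (by simp [hk])) (fun k hk => h1 k (by simp [hk]))
      (fun k hk => h k (by simp [hk]))
    have a0 := h0 k (by simp)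
    have a1 := h1 k (by simp)
    have a2 := h k (by simp)
    rw [M_cons, Lin_cons]
    refine ⟨?_, mul_nonneg a0 b, mul_le_one₀ a1 b d⟩
    nlinarith [mul_nonneg (sub_nonneg.2 a1) (sub_nonneg.2 d)]

/-! ### The weights -/

/-- The indicator of not being violated. -/
def wV : Kind → ℝ
  | b0 | b1 => 0 | _ => 1

/-- The weight counting `e3` constraints. -/
def w3 (a : ℝ) : Kind → ℝ
  | e3 => a | _ => 1

/-- The weight counting the occurrences of variables. -/
def wl (y : ℝ) (k : Kind) : ℝ := y ^ size k

/-- The weight counting the occurrences of variables outside `e3` constraints. -/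
def wQ (y : ℝ) (k : Kind) : ℝ := match k with
  | e3 => 1 | k => y ^ size k

/-- The weight counting the constraints that force variables. -/
def wE (α β : ℝ) : Kind → ℝ
  | e1 => α | z1 => β | z2 => β ^ 2 | _ => 1

/-- The number of forced occurrences in a constraint. -/
def cW : Kind → ℝ
  | e1 => 1 | z1 => 1 | z2 => 2 | _ => 0

/-- Only constraints that force a variable can become violated, each with probability at most `q`
times its number of forced occurrences. -/
lemma Step_V_ge (β : Bool) {q : ℝ} (hq : 0 ≤ q) (hq3 : 3 * q ≤ 1) (κ : List Kind)
    (hκ : ∀ k ∈ κ, wV k = 1) : 1 - q * Lin cW κ ≤ Step β q κ (M wV) := by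
  rw [Step_M, ← Lin_mul]
  refine (one_sub_Lin_le_M κ ?_ ?_ ?_).1
  · intro k _; cases β <;> cases k <;> simp only [stepw, wV, size, hit] <;> push_cast <;> linarith
  · intro k _; cases β <;> cases k <;> simp only [stepw, wV, size, hit] <;> push_cast <;> linarith
  · intro k hk
    have := hκ k hk
    cases β <;> cases k <;> simp only [stepw, wV, size, hit, cW] at this ⊢ <;> push_cast <;>
      linarith

lemma Step_3_le (β : Bool) {q a a' : ℝ} (hq3 : 3 * q ≤ 1) (ha : 1 ≤ a)
    (h : (1 - 3 * q) * (a - 1) ≤ a' - 1) (κ : List Kind) :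
    Step β q κ (M (w3 a)) ≤ M (w3 a') κ := by
  rw [Step_M]
  refine M_mono κ ?_ ?_
  · intro k; cases β <;> cases k <;> simp only [stepw, w3, size, hit] <;> push_cast <;>
      nlinarith
  · intro k; cases β <;> cases k <;> simp only [stepw, w3, size, hit] <;> push_cast <;>
      nlinarith

/-- A Bernoulli-type inequality: losing each of `size k` occurrences with probability `q` multiplies
the weight `y` of an occurrence by at most its mean effect. -/
lemma bern {q y : ℝ} (hq : 0 ≤ q) (hq3 : 3 * q ≤ 1) (hy : 1 ≤ y) (k : Kind) :
    (1 - size k * q) * y ^ size k + size k * q * y ^ (size k - 1) ≤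
      (y - q * (y - 1)) ^ size k := by
  have h1 : 0 ≤ q * (y - 1) := mul_nonneg hq (by linarith)
  have h2 : 0 ≤ (q * (y - 1)) ^ 2 := sq_nonneg _
  have h3 : 0 ≤ (q * (y - 1)) ^ 2 * (3 * y - q * (y - 1)) := by
    apply mul_nonneg h2; nlinarith
  cases k <;> simp only [size] <;> norm_num <;> nlinarith

lemma Step_l_le (β : Bool) {q y : ℝ} (hq : 0 ≤ q) (hq3 : 3 * q ≤ 1) (hy : 1 ≤ y) (κ : List Kind) :
    Step β q κ (M (wl y)) ≤ M (wl (y - q * (y - 1))) κ := by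
  rw [Step_M]
  refine M_mono κ ?_ ?_
  · intro k
    have h1 : (0 : ℝ) ≤ 1 - size k * q := by
      cases k <;> simp only [size] <;> push_cast <;> linarith
    have h2 : (0 : ℝ) ≤ size k * q := by positivity
    unfold stepw wl
    positivity
  · intro k
    unfold stepw wl
    rw [size_hit]
    exact bern hq hq3 hy k

lemma Step_Q_le (β : Bool) {q y : ℝ} (hq : 0 ≤ q) (hq3 : 3 * q ≤ 1) (hy : 1 ≤ y) (κ : List Kind) :
    Step β q κ (M (wQ y)) ≤
      M (wQ (y - q * (y - 1))) κ * Real.exp (3 * q * (y ^ 2 - 1) * κ.count e3) := by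
  rw [Step_M, ← Lin_ind]
  refine M_le_exp κ ?_ ?_
  · intro k
    have h1 : (0 : ℝ) ≤ 1 - size k * q := by
      cases k <;> simp only [size] <;> push_cast <;> linarith
    have h2 : (0 : ℝ) ≤ size k * q := by positivity
    have h3 : ∀ k, 0 ≤ wQ y k := by
      intro k; cases k <;> simp only [wQ] <;> positivity
    exact add_nonneg (mul_nonneg h1 (h3 _)) (mul_nonneg h2 (h3 _))
  · intro k
    by_cases hk : k = e3
    · subst hk
      have := Real.add_one_le_exp (3 * q * (y ^ 2 - 1))
      cases β <;> simp only [stepw, wQ, size, hit, if_true] <;> push_cast <;> linarith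
    · rw [if_neg hk, Real.exp_zero, mul_one]
      have := bern hq hq3 hy k
      have e1 : ∀ y, wQ y k = y ^ size k := by intro y; cases k <;> first | rfl | exact absurd rfl hk
      have e2 : wQ y (hit β k) = y ^ (size k - 1) := by
        rw [← size_hit β]; cases β <;> cases k <;> rfl
      rw [stepw, e1, e1, e2]
      exact this

lemma Step_E_true {q α α' b : ℝ} (hq : 0 ≤ q) (hq3 : 3 * q ≤ 1) (hα : 1 ≤ α) (hα' : α ≤ α')
    (hb : 1 ≤ b) (κ : List Kind) :
    Step true q κ (M (wE α b)) ≤ M (wE α' b) κ *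
      Real.exp (3 * q * (b ^ 2 - 1) * κ.count e3 + 2 * q * (b - 1) * κ.count e2) := by
  rw [Step_M, ← Lin_ind, ← Lin_ind, ← Lin_add]
  have hb2 : 1 ≤ b ^ 2 := one_le_pow₀ hb
  refine M_le_exp κ ?_ ?_
  · intro k
    cases k <;> simp only [stepw, wE, size, hit] <;> push_cast <;> nlinarith
  · intro k
    have h1 := Real.add_one_le_exp (3 * q * (b ^ 2 - 1))
    have h2 := Real.add_one_le_exp (2 * q * (b - 1))
    cases k <;> simp [stepw, wE, size, hit] <;> nlinarith

lemma Step_E_false {q α α' b : ℝ} (hq : 0 ≤ q) (hq3 : 3 * q ≤ 1) (hα : 1 ≤ α) (hα' : α ≤ α')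
    (hb : 1 ≤ b) (κ : List Kind) :
    Step false q κ (M (wE α b)) ≤ M (wE α' b) κ * Real.exp (2 * q * (α - 1) * κ.count e2) := by
  rw [Step_M, ← Lin_ind]
  have hb2 : 1 ≤ b ^ 2 := one_le_pow₀ hb
  refine M_le_exp κ ?_ ?_
  · intro k
    cases k <;> simp only [stepw, wE, size, hit] <;> push_cast <;> nlinarith
  · intro k
    have h2 := Real.add_one_le_exp (2 * q * (α - 1))
    have h3 : 0 ≤ q * b * (b - 1) := mul_nonneg (mul_nonneg hq (by linarith)) (by linarith)
    cases k <;> simp [stepw, wE, size, hit] <;> nlinarith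

/-! ### Numerical estimates -/

/-- An upper bound, per variable left, for the number of variable occurrences outside `e3`
constraints when a fraction `s` of the variables is left. For `0.55 ≤ s` it solves the fluid-limit
equation of that number up to a small excess; below `0.55`, where the solution decreases, it is
kept constant. -/
noncomputable def D (s : ℝ) : ℝ :=
  1 / 10 ^ 5 + Real.log (max s 0.55) + 3 * 0.54603 * (1 - (max s 0.55) ^ 2)

/-- The expected number of `z1` descendants of an `e1` constraint, with a little room. -/
noncomputable def A (s : ℝ) : ℝ := 6 * 0.54602 * s ^ 2 + D s + 1 / 10 ^ 4

lemma D_ge {s : ℝ} (hs : s ≤ 1) : 1 / 10 ^ 5 ≤ D s := by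
  unfold D
  have h1 : (0.55 : ℝ) ≤ max s 0.55 := le_max_right _ _
  have h2 : max s 0.55 ≤ (1 : ℝ) := max_le hs (by norm_num)
  set t := max s (0.55 : ℝ)
  have h3 := Real.one_sub_inv_le_log_of_pos (show 0 < t by linarith)
  have h4 : t⁻¹ ≤ 1 + 2 * (1 - t) := by
    rw [inv_le_iff_one_le_mul₀ (by linarith)]; nlinarith
  nlinarith

lemma D_le {s : ℝ} (hs : s ≤ 1) : D s ≤ 6 / 5 := by
  unfold D
  have h1 : (0.55 : ℝ) ≤ max s 0.55 := le_max_right _ _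
  have h2 : max s 0.55 ≤ (1 : ℝ) := max_le hs (by norm_num)
  set t := max s (0.55 : ℝ)
  have h3 := Real.log_nonpos (by linarith) h2
  nlinarith

lemma A_le {s : ℝ} (h0 : 0 ≤ s) (hs : s ≤ 1) : A s ≤ 5 := by
  unfold A
  have := D_le hs
  nlinarith

lemma A_ge {s : ℝ} (hs : s ≤ 1) : 1 / 10 ^ 4 ≤ A s := by
  unfold A
  have := D_ge hs
  nlinarith [sq_nonneg s]

lemma A_mono {s s' : ℝ} (h0 : 0 ≤ s) (h : s ≤ s') : A s ≤ A s' := by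
  unfold A D
  have hl : Real.log (max s 0.55) ≤ Real.log (max s' 0.55) :=
    Real.log_le_log (lt_of_lt_of_le (by norm_num) (le_max_right _ _)) (max_le_max_right _ h)
  have hsq : (max s' 0.55) ^ 2 - (max s 0.55) ^ 2 ≤ s' ^ 2 - s ^ 2 := by
    rcases le_total s 0.55 with a | a <;> rcases le_total s' 0.55 with b | b
    · rw [max_eq_right a, max_eq_right b]; nlinarith
    · rw [max_eq_right a, max_eq_left b]; nlinarith
    · rw [max_eq_left a, max_eq_right b]; nlinarith
    · rw [max_eq_left a, max_eq_left b]
  nlinarith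

lemma log_seven_tenths : Real.log 0.7 ≤ -0.35667 := by
  have h := Real.abs_log_sub_add_sum_range_le (x := (0.3 : ℝ)) (by norm_num [abs_of_pos]) 12
  rw [abs_of_pos (by norm_num : (0 : ℝ) < 0.3)] at h
  have h2 := (abs_le.1 h).2
  rw [show (1 : ℝ) - 0.3 = 0.7 by norm_num] at h2
  norm_num [Finset.sum_range_succ] at h2 ⊢
  linarith

/-- The bound of `D_mul_A` after the logarithm is replaced by its tangent at `0.7`, near the worst
point. -/
lemma quartic (t : ℝ) (h1 : 0.55 ≤ t) (h2 : t ≤ 1) :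
    (1 / 10 ^ 5 + (-0.35667 + (t - 0.7) / 0.7) + 3 * 0.54603 * (1 - t ^ 2)) *
      (6 * 0.54602 * t ^ 2 + (1 / 10 ^ 5 + (-0.35667 + (t - 0.7) / 0.7) +
        3 * 0.54603 * (1 - t ^ 2)) + 1 / 10 ^ 4) ≤ 1 - 1 / 10 ^ 4 := by
  obtain ⟨w, rfl⟩ : ∃ w, t = w + 0.698248 := ⟨t - 0.698248, by ring⟩
  have ha : 0 ≤ w + 0.15 := by linarith
  have hb : 0 ≤ 0.31 - w := by linarith
  have e1 := sq_nonneg (w * (w + 1.3965))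
  have e2 := sq_nonneg w
  have e3 := mul_nonneg ha (sq_nonneg w)
  have e4 := mul_nonneg hb (sq_nonneg w)
  rw [← sub_nonneg]
  ring_nf at e1 e2 e3 e4 ha hb ⊢
  linarith

/-- The branching process of forced variables is subcritical: this is where the density `0.546`
enters. -/
lemma D_mul_A {s : ℝ} (h0 : 0 ≤ s) (hs : s ≤ 1) : D s * A s ≤ 1 - 1 / 10 ^ 4 := by
  have hD := D_ge hs
  have h1 : (0.55 : ℝ) ≤ max s 0.55 := le_max_right _ _
  have h2 : max s 0.55 ≤ (1 : ℝ) := max_le hs (by norm_num)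
  have h3 : s ≤ max s 0.55 := le_max_left _ _
  unfold A
  have hDU : D s ≤ 1 / 10 ^ 5 + (-0.35667 + (max s 0.55 - 0.7) / 0.7) +
      3 * 0.54603 * (1 - (max s 0.55) ^ 2) := by
    unfold D
    set t := max s (0.55 : ℝ)
    have := Real.log_le_sub_one_of_pos (show 0 < t / 0.7 by positivity)
    rw [Real.log_div (by positivity) (by norm_num)] at this
    have h7 := log_seven_tenths
    have e : t / 0.7 - 1 = (t - 0.7) / 0.7 := by field_simp
    linarith
  set t := max s (0.55 : ℝ)
  set d := D s
  clear_value t d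
  have hs2 : s ^ 2 ≤ t ^ 2 := by gcongr
  set U := 1 / 10 ^ 5 + (-0.35667 + (t - 0.7) / 0.7) + 3 * 0.54603 * (1 - t ^ 2) with hU
  have hd0 : 0 ≤ d := by linarith [show (0 : ℝ) ≤ 1 / 10 ^ 5 by norm_num]
  have hU0 : 0 ≤ U := hd0.trans hDU
  calc d * (6 * 0.54602 * s ^ 2 + d + 1 / 10 ^ 4)
      ≤ U * (6 * 0.54602 * t ^ 2 + U + 1 / 10 ^ 4) := by gcongr
    _ ≤ 1 - 1 / 10 ^ 4 := by
      rw [hU]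
      exact quartic t h1 h2

/-- A discrete form of the differential inequality that makes `BQ` a valid normalization. -/
lemma D_diff {s h : ℝ} (hs : 1 / 10 ≤ s) (hh : 0 < h) (hh' : h ≤ 1 / 10 ^ 8) :
    D (s + h) - D s ≤ h * (1 / (s + h) - 6 * 0.54602 * (s + h) - 1 / 10 ^ 5) := by
  have hlog : ∀ t Δ : ℝ, 0.55 ≤ t → 0 ≤ Δ → Real.log (t + Δ) - Real.log t ≤ Δ / t := by
    intro t Δ ht hΔ
    have := Real.log_le_sub_one_of_pos (show 0 < (t + Δ) / t by positivity)
    rw [Real.log_div (by positivity) (by positivity)] at this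
    have e : (t + Δ) / t - 1 = Δ / t := by field_simp; ring
    linarith
  have hinv : ∀ t : ℝ, 0 < t → s + h ≤ t + 1 / 10 ^ 7 → 0.55 ≤ t →
      1 / t ≤ 1 / (s + h) + 4 / 10 ^ 7 := by
    intro t ht hst ht'
    rw [div_add' _ _ _ (by positivity), div_le_div_iff₀ ht (by positivity)]
    nlinarith
  unfold D
  rcases le_total (s + h) 0.55 with a | a
  · rw [max_eq_right a, max_eq_right (by linarith)]
    have : 1.81 ≤ 1 / (s + h) := by
      rw [le_div_iff₀ (by linarith)]; nlinarith
    nlinarith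
  · rw [max_eq_left a]
    rcases le_total s 0.55 with b | b
    · rw [max_eq_right b]
      have h1 := hlog 0.55 (s + h - 0.55) le_rfl (by linarith)
      rw [add_sub_cancel] at h1
      have h2 := hinv 0.55 (by norm_num) (by linarith) le_rfl
      have h3 := mul_le_mul_of_nonneg_left h2 hh.le
      have h4 : (s + h - 0.55) * (1 / 0.55 - 6 * 0.54603 * 0.55) ≤
          h * (1 / 0.55 - 6 * 0.54603 * 0.55) :=
        mul_le_mul_of_nonneg_right (by linarith) (by norm_num)
      have h5 : (s + h - 0.55) / 0.55 = (s + h - 0.55) * (1 / 0.55) := by ring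
      have h6 : h * (s + h) ≤ h * (0.55 + 1 / 10 ^ 8) :=
        mul_le_mul_of_nonneg_left (by linarith) hh.le
      nlinarith [sq_nonneg (s + h - 0.55)]
    · rw [max_eq_left b]
      have h1 := hlog s h b hh.le
      have h2 := hinv s (by linarith) (by linarith) b
      rw [show h / s = h * (1 / s) by ring] at h1
      have h3 := mul_le_mul_of_nonneg_left h2 hh.le
      nlinarith

/-! ### The potentials -/

/-- The exponential tilt of the counting potentials. -/
noncomputable def zz : ℝ := 1 / 10 ^ 9

/-- The exponential tilt of the potential of forced variables. -/
noncomputable def th : ℝ := 1 / 10 ^ 6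

/-- The relative decrease of the potential of forced variables in a forced step. -/
noncomputable def et : ℝ := th / 40000

/-- The scale of the potential of forced variables; large enough for the decrease `et` to pay for
the probability of a contradiction in a step. -/
noncomputable def KK : ℝ := 10 / (et * (th / 10 ^ 4))

/-- The total cost rate of the free steps. -/
noncomputable def CC : ℝ := 2 * (2 * KK + 1)

/-- The tilt per variable occurrence, with `x` variables left out of `N`. -/
noncomputable def yy (N x : ℝ) : ℝ := 1 + zz * (N / x)

/-- The tilt per `e3` constraint, with `x` variables left out of `N`. -/
noncomputable def aa (N x : ℝ) : ℝ := 1 + zz * (N / x) ^ 3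

/-- Normalization of the `e3` potential. -/
noncomputable def B3 (N : ℝ) : ℝ := Real.exp (-(zz * 0.54601 * N))

/-- Normalization of the potential of variable occurrences. -/
noncomputable def Bl (N x : ℝ) : ℝ :=
  Real.exp (-(zz * N * (3 * 0.5461 + 0.8 * Real.log (x / N))))

/-- Normalization of the potential of variable occurrences outside `e3` constraints. -/
noncomputable def BQ (N x : ℝ) : ℝ := Real.exp (-(zz * N * D (x / N)))

/-- Weight of an `e1` constraint in the potential of forced variables. -/
noncomputable def al (N x : ℝ) : ℝ := Real.exp (th * A (x / N))

/-- Weight of a `z1` constraint in the potential of forced variables. -/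
noncomputable def be : ℝ := Real.exp th

/-- The lower bound for the success probability from `x` variables left, before corrections. -/
noncomputable def HH (N x : ℝ) : ℝ := Real.exp (-(CC * (x / N)))

/-- The lower bound for the satisfiability probability of random constraints of the kinds in `κ`,
with `x` variables left out of `N`. -/
noncomputable def Phi (N x : ℝ) (κ : List Kind) : ℝ :=
  HH N x * (M wV κ - KK / N * M (wE (al N x) be) κ) - B3 N * M (w3 (aa N x)) κ -
    Bl N x * M (wl (yy N x)) κ - BQ N x * M (wQ (yy N x)) κ

lemma zz_pos : 0 < zz := by unfold zz; positivity
lemma th_pos : 0 < th := by unfold th; positivity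
lemma et_pos : 0 < et := by unfold et th; positivity
lemma KK_pos : 0 < KK := by unfold KK et th; positivity
lemma CC_pos : 0 < CC := by unfold CC; linarith [KK_pos]

lemma exp_le_quad {x : ℝ} (h : |x| ≤ 1) : Real.exp x ≤ 1 + x + x ^ 2 := by
  linarith [(abs_le.1 (Real.abs_exp_sub_one_sub_id_le h)).2]

lemma exp_neg_le {x : ℝ} (h0 : 0 ≤ x) (h : x ≤ 1 / 2) : Real.exp (-x) ≤ 1 - x / 2 := by
  have := exp_le_quad (x := -x) (by rw [abs_neg, abs_of_nonneg h0]; linarith)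
  nlinarith

lemma exp_sub_sq_le {u : ℝ} (h0 : 0 ≤ u) : Real.exp (u - u ^ 2) ≤ 1 + u := by
  have h := Real.add_one_le_exp (-(u - u ^ 2))
  have h2 : Real.exp (u - u ^ 2) * Real.exp (-(u - u ^ 2)) = 1 := by
    rw [← Real.exp_add]; simp
  have h3 := Real.exp_pos (u - u ^ 2)
  have h4 : Real.exp (u - u ^ 2) * (-(u - u ^ 2) + 1) ≤ 1 := by
    exact (mul_le_mul_of_nonneg_left h h3.le).trans h2.le
  have h5 : 0 < 1 - u + u ^ 2 := by nlinarith
  have h6 : (1 + u) * (1 - u + u ^ 2) = 1 + u ^ 3 := by ring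
  have h7 : 0 ≤ u ^ 3 := by positivity
  by_contra hc
  push Not at hc
  nlinarith [mul_lt_mul_of_pos_right hc h5]

lemma yy_step {N x : ℝ} (hx : 0 < x) :
    yy N (x + 1) = yy N x - 1 / (x + 1) * (yy N x - 1) := by
  unfold yy; field_simp; ring

lemma one_le_yy {N x : ℝ} (hN : 0 ≤ N) (hx : 0 < x) : 1 ≤ yy N x := by
  have := zz_pos
  unfold yy
  have : 0 ≤ zz * (N / x) := by positivity
  linarith

lemma one_le_aa {N x : ℝ} (hN : 0 ≤ N) (hx : 0 < x) : 1 ≤ aa N x := by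
  have := zz_pos
  unfold aa
  have : 0 ≤ zz * (N / x) ^ 3 := by positivity
  linarith

lemma aa_step {N x : ℝ} (hN : 0 ≤ N) (hx : 0 < x) :
    (1 - 3 * (1 / (x + 1))) * (aa N x - 1) ≤ aa N (x + 1) - 1 := by
  unfold aa
  have h1 : N / (x + 1) = (1 - 1 / (x + 1)) * (N / x) := by field_simp; ring
  have hz := zz_pos
  have h2 : 0 ≤ zz * (N / x) ^ 3 := by positivity
  have hq : 0 ≤ 1 / (x + 1) := by positivity
  have hq1 : 1 / (x + 1) ≤ 1 := by rw [div_le_one (by linarith)]; linarith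
  rw [h1, mul_pow]
  set q := 1 / (x + 1)
  have h3 : 1 - 3 * q ≤ (1 - q) ^ 3 := by nlinarith [mul_nonneg (sq_nonneg q) (sub_nonneg.2 hq1)]
  nlinarith [mul_le_mul_of_nonneg_right h3 h2]

lemma yy_le {N x : ℝ} (hN : 0 ≤ N) (hx : 0 < x) :
    yy N x ≤ yy N (x + 1) * Real.exp (zz * (N / x) / (x + 1)) := by
  have h1 : yy N x = yy N (x + 1) + zz * (N / x) / (x + 1) := by
    rw [yy_step hx]; unfold yy; ring
  have h2 := one_le_yy hN (show 0 < x + 1 by linarith)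
  have h3 := Real.add_one_le_exp (zz * (N / x) / (x + 1))
  have hz := zz_pos
  have h4 : 0 ≤ zz * (N / x) / (x + 1) := by positivity
  calc yy N x = yy N (x + 1) + zz * (N / x) / (x + 1) := h1
    _ ≤ yy N (x + 1) * (zz * (N / x) / (x + 1) + 1) := by nlinarith
    _ ≤ _ := by gcongr

lemma Bl_step {N x : ℝ} (hN : 10 ^ 9 ≤ N) (hx : N / 10 ≤ x) {j : ℕ} (hj : j ≤ 2) :
    Bl N x * yy N x ^ j ≤ Bl N (x + 1) * yy N (x + 1) ^ (j + 1) := by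
  have hx0 : 0 < x := by linarith
  have hN0 : 0 < N := by linarith
  have hy1 := one_le_yy hN0.le (show 0 < x + 1 by linarith)
  have hy0 := one_le_yy hN0.le hx0
  set u := zz * (N / (x + 1)) with hu
  have hu0 : 0 < u := by have := zz_pos; positivity
  have hu1 : u ≤ 1 / 20 := by
    have : N / (x + 1) ≤ 10 := by rw [div_le_iff₀ (by linarith)]; linarith
    rw [hu]; unfold zz; linarith
  have hv : zz * (N / x) = u * ((x + 1) / x) := by rw [hu]; field_simp
  have hr : (x + 1) / x ≤ 1.001 := by rw [div_le_iff₀ hx0]; linarith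
  have hr0 : 0 ≤ (x + 1) / x := by positivity
  have hB : Bl N x ≤ Bl N (x + 1) * Real.exp (0.8 * (zz * (N / x))) := by
    unfold Bl
    rw [← Real.exp_add, Real.exp_le_exp]
    have h1 := Real.log_le_sub_one_of_pos (show 0 < ((x + 1) / N) / (x / N) by positivity)
    rw [Real.log_div (by positivity) (by positivity)] at h1
    have h2 : (x + 1) / N / (x / N) - 1 = 1 / x := by field_simp; ring
    have h3 : zz * N * (Real.log ((x + 1) / N) - Real.log (x / N)) ≤ zz * N * (1 / x) := by
      have := zz_pos
      gcongr; linarith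
    have h4 : zz * (N / x) = zz * N * (1 / x) := by ring
    rw [h4]; linarith
  have hyj : yy N x ^ j ≤ yy N (x + 1) ^ j * Real.exp (0.01 * u) := by
    calc yy N x ^ j ≤ (yy N (x + 1) * Real.exp (zz * (N / x) / (x + 1))) ^ j := by
          gcongr; exact yy_le hN0.le hx0
      _ = yy N (x + 1) ^ j * Real.exp (j * (zz * (N / x) / (x + 1))) := by
          rw [mul_pow, ← Real.exp_nat_mul]
      _ ≤ _ := by
          refine mul_le_mul_of_nonneg_left (Real.exp_le_exp.2 ?_) (by positivity)
          have hj' : (j : ℝ) ≤ 2 := by exact_mod_cast hj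
          have h5 : zz * (N / x) / (x + 1) ≤ 0.005 * u := by
            rw [hv, div_le_iff₀ (by linarith)]
            nlinarith [mul_le_mul_of_nonneg_left hr hu0.le]
          have h6 : 0 ≤ zz * (N / x) / (x + 1) := by rw [hv]; positivity
          nlinarith
  have hfin : Real.exp (0.8 * (zz * (N / x))) * Real.exp (0.01 * u) ≤ yy N (x + 1) := by
    rw [← Real.exp_add]
    refine le_trans ?_ (exp_sub_sq_le hu0.le : _ ≤ 1 + u)
    rw [Real.exp_le_exp, hv]
    nlinarith [mul_le_mul_of_nonneg_left hr hu0.le]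
  calc Bl N x * yy N x ^ j ≤ (Bl N (x + 1) * Real.exp (0.8 * (zz * (N / x)))) *
        (yy N (x + 1) ^ j * Real.exp (0.01 * u)) := by
        apply mul_le_mul hB hyj (by positivity)
        unfold Bl; positivity
    _ = Bl N (x + 1) * yy N (x + 1) ^ j *
        (Real.exp (0.8 * (zz * (N / x))) * Real.exp (0.01 * u)) := by ring
    _ ≤ Bl N (x + 1) * yy N (x + 1) ^ j * yy N (x + 1) := by
        gcongr
        unfold Bl; positivity
    _ = _ := by rw [pow_succ]; ring

/-- Bookkeeping of the second-order terms in `BQ_step`. -/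
lemma BQ_err {s h : ℝ} (hs0 : 1 / 10 ≤ s) (hh0 : 0 < h) (hh1 : h ≤ 1 / 10 ^ 9) :
    3 * 0.54602 * (s + h) ^ 2 * (2 * (1 / s) + zz * (1 / s) ^ 2) +
      (1 / s) * (h / (s + h)) + zz * (1 / (s + h)) ^ 2 ≤ 6 * 0.54602 * (s + h) + 1 / 10 ^ 5 := by
  have r1 : 1 / s ≤ 10 := by rw [div_le_iff₀ (by linarith)]; linarith
  have r0 : 0 ≤ 1 / s := by positivity
  have r2 : 1 / (s + h) ≤ 10 := by rw [div_le_iff₀ (by linarith)]; linarith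
  have r20 : 0 ≤ 1 / (s + h) := by positivity
  obtain ⟨ρ, hρ⟩ : ∃ ρ, ρ = h * (1 / s) := ⟨_, rfl⟩
  have hρ0 : 0 ≤ ρ := by rw [hρ]; positivity
  have hρ1 : ρ ≤ 1 / 10 ^ 8 := by
    calc ρ ≤ 1 / 10 ^ 9 * 10 := by rw [hρ]; gcongr
      _ = _ := by norm_num
  have hq : (s + h) * (1 / s) = 1 + ρ := by rw [hρ]; field_simp
  have f1 : 3 * 0.54602 * (s + h) ^ 2 * (2 * (1 / s) + zz * (1 / s) ^ 2) =
      6 * 0.54602 * (s + h) * (1 + ρ) + 3 * 0.54602 * zz * (1 + ρ) ^ 2 := by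
    rw [← hq]; ring
  have f2 : (1 / s) * (h / (s + h)) = ρ * (1 / (s + h)) := by rw [hρ]; ring
  have f3 : (s + h) * ρ = h * (1 + ρ) := by rw [← hq, hρ]; ring
  have f4 : (1 / (s + h)) ^ 2 ≤ 10 ^ 2 := by gcongr
  have f5 : (1 + ρ) ^ 2 ≤ 2 ^ 2 := by gcongr; linarith
  have f6 : ρ * (1 / (s + h)) ≤ 1 / 10 ^ 8 * 10 := by gcongr
  have f7 : h * (1 + ρ) ≤ 1 / 10 ^ 9 * 2 := by gcongr; linarith
  have f8 : 6 * 0.54602 * (s + h) * (1 + ρ) =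
      6 * 0.54602 * (s + h) + 6 * 0.54602 * ((s + h) * ρ) := by ring
  rw [f1, f2, f8, f3]
  unfold zz
  linarith

lemma BQ_step {N x m : ℝ} (hN : 10 ^ 9 ≤ N) (hx : N / 10 ≤ x)
    (hm : m ≤ 0.54602 * N * ((x + 1) / N) ^ 3) {j : ℕ} (hj : j ≤ 1) :
    BQ N x * yy N x ^ j * Real.exp (3 * (1 / (x + 1)) * (yy N x ^ 2 - 1) * m) ≤
      BQ N (x + 1) * yy N (x + 1) ^ (j + 1) := by
  have hx0 : 0 < x := by linarith
  have hN0 : 0 < N := by linarith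
  have hz := zz_pos
  have hy1 := one_le_yy hN0.le (show 0 < x + 1 by linarith)
  have hy0 := one_le_yy hN0.le hx0
  obtain ⟨h, hh⟩ : ∃ h, h = 1 / N := ⟨_, rfl⟩
  obtain ⟨s, hs⟩ : ∃ s, s = x / N := ⟨_, rfl⟩
  have hh0 : 0 < h := by rw [hh]; positivity
  have hh1 : h ≤ 1 / 10 ^ 9 := by rw [hh]; gcongr
  have hs0 : 1 / 10 ≤ s := by rw [hs, le_div_iff₀ hN0]; linarith
  have hsh : (x + 1) / N = s + h := by rw [hs, hh]; ring
  have hNx : N / x = 1 / s := by rw [hs]; field_simp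
  have hNx1 : N / (x + 1) = 1 / (s + h) := by rw [← hsh]; field_simp
  have hNh : N * h = 1 := by rw [hh]; field_simp
  have hx1 : 1 / (x + 1) = h / (s + h) := by rw [← hsh, hh]; field_simp
  have hyj : yy N x ^ j ≤ yy N (x + 1) ^ j * Real.exp (zz * (1 / s) * (h / (s + h))) := by
    have h1 : yy N x ≤ yy N (x + 1) * Real.exp (zz * (1 / s) * (h / (s + h))) := by
      have := yy_le hN0.le hx0
      rwa [hNx, div_eq_mul_one_div, hx1] at this
    have h0 : 1 ≤ Real.exp (zz * (1 / s) * (h / (s + h))) := by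
      apply Real.one_le_exp; positivity
    interval_cases j
    · simpa using h0
    · simpa using h1
  have hyu : Real.exp (zz * (1 / (s + h)) - (zz * (1 / (s + h))) ^ 2) ≤ yy N (x + 1) := by
    unfold yy
    rw [hNx1]
    exact exp_sub_sq_le (by positivity)
  -- the inequality between the exponents
  have hmain : -(zz * N * D s) + zz * (1 / s) * (h / (s + h)) +
      3 * (h / (s + h)) * (yy N x ^ 2 - 1) * m ≤
      -(zz * N * D (s + h)) + (zz * (1 / (s + h)) - (zz * (1 / (s + h))) ^ 2) := by
    have hD := D_diff hs0 hh0 (by linarith)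
    have hDN : N * (D (s + h) - D s) ≤ 1 / (s + h) - 6 * 0.54602 * (s + h) - 1 / 10 ^ 5 := by
      calc _ ≤ N * (h * (1 / (s + h) - 6 * 0.54602 * (s + h) - 1 / 10 ^ 5)) := by gcongr
        _ = _ := by rw [← mul_assoc, hNh, one_mul]
    have hm2 : 3 * (h / (s + h)) * (yy N x ^ 2 - 1) * m ≤
        zz * (3 * 0.54602 * (s + h) ^ 2 * (2 * (1 / s) + zz * (1 / s) ^ 2)) := by
      have e1 : yy N x ^ 2 - 1 = zz * (2 * (1 / s) + zz * (1 / s) ^ 2) := by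
        unfold yy; rw [hNx]; ring
      have e2 : (h / (s + h)) * m ≤ 0.54602 * (s + h) ^ 2 := by
        rw [hsh] at hm
        calc (h / (s + h)) * m ≤ (h / (s + h)) * (0.54602 * N * (s + h) ^ 3) := by gcongr
          _ = 0.54602 * (s + h) ^ 2 * (N * h) := by field_simp
          _ = _ := by rw [hNh, mul_one]
      have e3 : 0 ≤ zz * (2 * (1 / s) + zz * (1 / s) ^ 2) := by positivity
      rw [e1]
      nlinarith [mul_le_mul_of_nonneg_right e2 e3]
    have herr : 3 * 0.54602 * (s + h) ^ 2 * (2 * (1 / s) + zz * (1 / s) ^ 2) +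
        (1 / s) * (h / (s + h)) + zz * (1 / (s + h)) ^ 2 ≤
        6 * 0.54602 * (s + h) + 1 / 10 ^ 5 
      := BQ_err hs0 hh0 hh1
    have := mul_le_mul_of_nonneg_left herr hz.le
    have := mul_le_mul_of_nonneg_left hDN hz.le
    linarith
  unfold BQ
  rw [← hs, hsh, hx1]
  calc Real.exp (-(zz * N * D s)) * yy N x ^ j *
        Real.exp (3 * (h / (s + h)) * (yy N x ^ 2 - 1) * m)
      ≤ Real.exp (-(zz * N * D s)) *
        (yy N (x + 1) ^ j * Real.exp (zz * (1 / s) * (h / (s + h)))) *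
        Real.exp (3 * (h / (s + h)) * (yy N x ^ 2 - 1) * m) := by gcongr
    _ = yy N (x + 1) ^ j * Real.exp (-(zz * N * D s) + zz * (1 / s) * (h / (s + h)) +
          3 * (h / (s + h)) * (yy N x ^ 2 - 1) * m) := by
        rw [Real.exp_add, Real.exp_add]; ring
    _ ≤ yy N (x + 1) ^ j * Real.exp (-(zz * N * D (s + h)) +
          (zz * (1 / (s + h)) - (zz * (1 / (s + h))) ^ 2)) := by gcongr
    _ = Real.exp (-(zz * N * D (s + h))) * yy N (x + 1) ^ j *
          Real.exp (zz * (1 / (s + h)) - (zz * (1 / (s + h))) ^ 2) := by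
        rw [Real.exp_add]; ring
    _ ≤ Real.exp (-(zz * N * D (s + h))) * yy N (x + 1) ^ j * yy N (x + 1) := by gcongr
    _ = _ := by rw [pow_succ]; ring

/-! ### Consequences of small potentials -/

lemma M_w3 (a : ℝ) (κ : List Kind) : M (w3 a) κ = a ^ κ.count e3 := by
  induction κ with
  | nil => simp [M]
  | cons k κ ih =>
    rw [M_cons, ih, List.count_cons]
    cases k <;> simp [w3, pow_succ, mul_comm]

/-- A small `e3` potential bounds the number of `e3` constraints. -/
lemma count_e3_le {N x : ℝ} (hN : 0 < N) (hx : N / 10 ≤ x) {κ : List Kind}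
    (h : B3 N * M (w3 (aa N x)) κ < 1) : (κ.count e3 : ℝ) ≤ 0.54602 * N * (x / N) ^ 3 := by
  have hx0 : 0 < x := by linarith
  have hz := zz_pos
  set m : ℝ := ((κ.count e3 : ℕ) : ℝ) with hm
  have hm0 : 0 ≤ m := by positivity
  obtain ⟨c, hc⟩ : ∃ c, c = (x / N) ^ 3 := ⟨_, rfl⟩
  have hc0 : 1 / 10 ^ 3 ≤ c := by
    have : 1 / 10 ≤ x / N := by rw [le_div_iff₀ hN]; linarith
    rw [hc]
    calc (1 / 10 ^ 3 : ℝ) = (1 / 10) ^ 3 := by norm_num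
      _ ≤ _ := by gcongr
  have ha : aa N x = 1 + zz / c := by
    unfold aa; rw [hc]; field_simp
  have ha0 : 0 < aa N x := by rw [ha]; positivity
  rw [M_w3, ← Real.exp_log (pow_pos ha0 _), Real.log_pow, B3, ← Real.exp_add,
    Real.exp_lt_one_iff, ← hm] at h
  have h1 := Real.one_sub_inv_le_log_of_pos ha0
  have h2 : 1 - (aa N x)⁻¹ = zz / (c + zz) := by rw [ha]; field_simp; ring
  rw [h2] at h1
  have h3 : m * (zz / (c + zz)) < zz * 0.54601 * N := by
    nlinarith [mul_le_mul_of_nonneg_left h1 hm0]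
  have h4 : m * zz < zz * 0.54601 * N * (c + zz) := by
    rw [mul_div_assoc', div_lt_iff₀ (by positivity)] at h3; exact h3
  have h5 : m < 0.54601 * N * (c + zz) := by nlinarith
  rw [← hc]
  have h6 : 0.54601 * zz ≤ 0.00001 * c := by unfold zz; linarith
  nlinarith [mul_le_mul_of_nonneg_left h6 hN.le]

/-- A small potential of occurrences outside `e3` constraints bounds the number of `e2`
constraints. -/
lemma count_e2_le {N x : ℝ} (hN : 0 < N) (hx : N / 10 ≤ x) {κ : List Kind}
    (h : BQ N x * M (wQ (yy N x)) κ < 1) :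
    2 * (κ.count e2 : ℝ) ≤ N * D (x / N) * (x / N + zz) := by
  have hx0 : 0 < x := by linarith
  have hz := zz_pos
  have hy := one_le_yy hN.le hx0
  have hlog : 0 ≤ Real.log (yy N x) := Real.log_nonneg hy
  have h1 : Real.exp (Lin (fun k => if k = e2 then 2 * Real.log (yy N x) else 0) κ) ≤
      M (wQ (yy N x)) κ := by
    refine exp_Lin_le_M κ fun k => ?_
    by_cases hk : k = e2
    · subst hk
      rw [if_pos rfl, two_mul, Real.exp_add, Real.exp_log (by linarith)]
      simp [wQ, size, sq]
    · rw [if_neg hk, Real.exp_zero]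
      cases k <;> simp only [wQ] <;> first | exact le_refl _ | exact one_le_pow₀ hy
  rw [Lin_ind] at h1
  set m : ℝ := ((κ.count e2 : ℕ) : ℝ) with hm
  have hm0 : 0 ≤ m := by positivity
  have h2 : Real.exp (-(zz * N * D (x / N))) * Real.exp (2 * Real.log (yy N x) * m) < 1 :=
    lt_of_le_of_lt (mul_le_mul_of_nonneg_left h1 (Real.exp_pos _).le) h
  rw [← Real.exp_add, Real.exp_lt_one_iff] at h2
  obtain ⟨c, hc⟩ : ∃ c, c = x / N := ⟨_, rfl⟩
  have hc0 : 0 < c := by rw [hc]; positivity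
  have ha : yy N x = 1 + zz / c := by
    unfold yy; rw [hc]; field_simp
  have h3 := Real.one_sub_inv_le_log_of_pos (show 0 < yy N x by linarith)
  have h4 : 1 - (yy N x)⁻¹ = zz / (c + zz) := by rw [ha]; field_simp; ring
  rw [h4] at h3
  rw [← hc] at h2 ⊢
  have h5 : 2 * m * (zz / (c + zz)) < zz * N * D c := by
    nlinarith [mul_le_mul_of_nonneg_left h3 hm0]
  rw [mul_div_assoc', div_lt_iff₀ (by positivity)] at h5
  have h6 : zz * (2 * m) ≤ zz * (N * D c * (c + zz)) := by linarith
  exact le_of_mul_le_mul_left h6 hz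

lemma be_sub_one : be - 1 ≤ th * (1 + 1 / 10 ^ 6) := by
  have := exp_le_quad (x := th) (by rw [abs_of_pos th_pos]; unfold th; norm_num)
  have e : be = Real.exp th := rfl
  rw [e]
  unfold th at *
  linarith

lemma be_sq_sub_one : be ^ 2 - 1 ≤ 2 * th * (1 + 2 / 10 ^ 6) := by
  have := exp_le_quad (x := 2 * th) (by
    rw [abs_of_pos (by linarith [th_pos])]; unfold th; norm_num)
  have e : be ^ 2 = Real.exp (2 * th) := by rw [be, sq, ← Real.exp_add]; ring_nf
  rw [e]
  unfold th at *
  linarith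

lemma one_le_be : 1 ≤ be := Real.one_le_exp th_pos.le

/-- A true variable in an `e1` constraint creates less than `A` new `z1` occurrences. -/
lemma expo_true {N x m3 m2 : ℝ} (hN : 0 < N) (hx : N / 10 ≤ x) (hxN : x ≤ N)
    (h3 : m3 ≤ 0.54602 * N * (x / N) ^ 3)
    (h2 : 2 * m2 ≤ N * D (x / N) * (x / N + zz)) :
    3 * (1 / x) * (be ^ 2 - 1) * m3 + 2 * (1 / x) * (be - 1) * m2 ≤
      th * (A (x / N) - 1 / (2 * 10 ^ 4)) := by
  have hx0 : 0 < x := by linarith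
  obtain ⟨s, hs⟩ : ∃ s, s = x / N := ⟨_, rfl⟩
  have hs0 : 1 / 10 ≤ s := by rw [hs, le_div_iff₀ hN]; linarith
  have hs1 : s ≤ 1 := by rw [hs, div_le_one hN]; exact hxN
  rw [← hs] at h3 h2 ⊢
  have hD := D_ge hs1
  have hD2 := D_le hs1
  have hxs : x = N * s := by rw [hs]; field_simp
  have hth := th_pos
  have e3 : (1 / x) * m3 ≤ 0.54602 * s ^ 2 := by
    rw [one_div_mul_eq_div, div_le_iff₀ hx0, hxs]; linarith
  have e2 : (1 / x) * (2 * m2) ≤ D s * (1 + 1 / 10 ^ 8) := by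
    rw [one_div_mul_eq_div, div_le_iff₀ hx0, hxs]
    refine h2.trans ?_
    have : s + zz ≤ s * (1 + 1 / 10 ^ 8) := by unfold zz; linarith
    have h0 : 0 ≤ N * D s := mul_nonneg hN.le (by linarith [show (0 : ℝ) ≤ 1 / 10 ^ 5 by norm_num])
    nlinarith [mul_le_mul_of_nonneg_left this h0]
  have b1 := be_sub_one
  have b2 := be_sq_sub_one
  have b0 := one_le_be
  have b02 : 1 ≤ be ^ 2 := one_le_pow₀ b0
  have D0 : 0 ≤ D s := by linarith [show (0 : ℝ) ≤ 1 / 10 ^ 5 by norm_num]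
  have g3 : (be ^ 2 - 1) * ((1 / x) * m3) ≤ (2 * th * (1 + 2 / 10 ^ 6)) * (0.54602 * s ^ 2) :=
    (mul_le_mul_of_nonneg_left e3 (by linarith)).trans
      (mul_le_mul_of_nonneg_right b2 (by positivity))
  have g2 : (be - 1) * ((1 / x) * (2 * m2)) ≤
      (th * (1 + 1 / 10 ^ 6)) * (D s * (1 + 1 / 10 ^ 8)) :=
    (mul_le_mul_of_nonneg_left e2 (by linarith)).trans
      (mul_le_mul_of_nonneg_right b1 (by positivity))
  have g4 : 3 * (2 * (1 + 2 / 10 ^ 6)) * (0.54602 * s ^ 2) +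
      (1 + 1 / 10 ^ 6) * (D s * (1 + 1 / 10 ^ 8)) ≤ A s - 1 / (2 * 10 ^ 4) := by
    unfold A
    nlinarith
  have := mul_le_mul_of_nonneg_left g4 hth.le
  linarith

/-- A false variable in a `z1` constraint creates less than one new `z1` occurrence, where an `e1`
constraint counts for `A` occurrences. -/
lemma expo_false {N x m2 α : ℝ} (hN : 0 < N) (hx : N / 10 ≤ x) (hxN : x ≤ N) (hm : 0 ≤ m2)
    (hα : α ≤ al N x) (h2 : 2 * m2 ≤ N * D (x / N) * (x / N + zz)) :
    2 * (1 / x) * (α - 1) * m2 ≤ th * (1 - 1 / (2 * 10 ^ 4)) := by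
  have hx0 : 0 < x := by linarith
  obtain ⟨s, hs⟩ : ∃ s, s = x / N := ⟨_, rfl⟩
  have hs0 : 1 / 10 ≤ s := by rw [hs, le_div_iff₀ hN]; linarith
  have hs1 : s ≤ 1 := by rw [hs, div_le_one hN]; exact hxN
  unfold al at hα
  rw [← hs] at hα h2
  have hD := D_ge hs1
  have hxs : x = N * s := by rw [hs]; field_simp
  have hth := th_pos
  have D0 : 0 ≤ D s := by linarith [show (0 : ℝ) ≤ 1 / 10 ^ 5 by norm_num]
  have A0 : 0 ≤ A s := by linarith [show (0 : ℝ) ≤ 1 / 10 ^ 4 by norm_num, A_ge hs1]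
  have A1 : A s ≤ 5 := A_le (by linarith) hs1
  have e2 : (1 / x) * (2 * m2) ≤ D s * (1 + 1 / 10 ^ 8) := by
    rw [one_div_mul_eq_div, div_le_iff₀ hx0, hxs]
    refine h2.trans ?_
    have : s + zz ≤ s * (1 + 1 / 10 ^ 8) := by unfold zz; linarith
    have h0 : 0 ≤ N * D s := mul_nonneg hN.le D0
    nlinarith [mul_le_mul_of_nonneg_left this h0]
  have hq : 0 ≤ (1 / x) * (2 * m2) := by positivity
  have a1 : α - 1 ≤ th * A s * (1 + 1 / 10 ^ 5) := by
    have h0 : 0 ≤ th * A s := by positivity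
    have h1 : th * A s ≤ 1 / 10 ^ 5 := by unfold th; linarith
    have := exp_le_quad (x := th * A s) (by rw [abs_of_nonneg h0]; linarith)
    nlinarith
  have DA := D_mul_A (by linarith) hs1
  calc 2 * (1 / x) * (α - 1) * m2 = (α - 1) * ((1 / x) * (2 * m2)) := by ring
    _ ≤ (th * A s * (1 + 1 / 10 ^ 5)) * ((1 / x) * (2 * m2)) := by gcongr
    _ ≤ (th * A s * (1 + 1 / 10 ^ 5)) * (D s * (1 + 1 / 10 ^ 8)) := by gcongr
    _ = th * ((D s * A s) * ((1 + 1 / 10 ^ 5) * (1 + 1 / 10 ^ 8))) := by ring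
    _ ≤ th * ((1 - 1 / 10 ^ 4) * ((1 + 1 / 10 ^ 5) * (1 + 1 / 10 ^ 8))) := by gcongr
    _ ≤ _ := by
      refine mul_le_mul_of_nonneg_left ?_ hth.le
      norm_num

lemma exp_decay (c : ℝ) :
    Real.exp (th * (c - 1 / (2 * 10 ^ 4))) ≤ (1 - et) * Real.exp (th * c) := by
  have h := exp_neg_le (x := th / (2 * 10 ^ 4)) (by have := th_pos; positivity)
    (by unfold th; norm_num)
  have e : 1 - th / (2 * 10 ^ 4) / 2 = 1 - et := by unfold et; ring
  rw [e] at h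
  calc Real.exp (th * (c - 1 / (2 * 10 ^ 4)))
      = Real.exp (-(th / (2 * 10 ^ 4))) * Real.exp (th * c) := by
        rw [← Real.exp_add]; congr 1; ring
    _ ≤ _ := by gcongr

/-- The number of forced occurrences is bounded by the potential of forced variables. -/
lemma Lin_cW_le {N x : ℝ} (hN : 0 < N) (hxN : x ≤ N) (κ : List Kind) :
    th / 10 ^ 4 * Lin cW κ ≤ M (wE (al N x) be) κ := by
  have hs1 : x / N ≤ 1 := by rw [div_le_one hN]; exact hxN
  have hth := th_pos
  have hA := A_ge hs1
  have h : Real.exp (Lin (fun k => th / 10 ^ 4 * cW k) κ) ≤ M (wE (al N x) be) κ := by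
    refine exp_Lin_le_M κ fun k => ?_
    cases k <;> simp only [cW, wE, mul_zero, Real.exp_zero, le_refl]
    · unfold al
      rw [Real.exp_le_exp]
      have := mul_le_mul_of_nonneg_left hA hth.le
      linarith
    · rw [be, sq, ← Real.exp_add, Real.exp_le_exp]; linarith
    · rw [be, Real.exp_le_exp]; linarith
  rw [Lin_mul] at h
  linarith [Real.add_one_le_exp (th / 10 ^ 4 * Lin cW κ)]

/-! ### One step of the potential argument -/

lemma HH_pos (N x : ℝ) : 0 < HH N x := Real.exp_pos _
lemma B3_pos (N : ℝ) : 0 < B3 N := Real.exp_pos _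
lemma Bl_pos (N x : ℝ) : 0 < Bl N x := Real.exp_pos _
lemma BQ_pos (N x : ℝ) : 0 < BQ N x := Real.exp_pos _
lemma al_pos (N x : ℝ) : 0 < al N x := Real.exp_pos _
lemma be_pos : 0 < be := Real.exp_pos _

lemma wV_nonneg (k : Kind) : 0 ≤ wV k := by cases k <;> simp [wV]

lemma w3_nonneg {a : ℝ} (ha : 0 ≤ a) (k : Kind) : 0 ≤ w3 a k := by
  cases k <;> simp only [w3] <;> linarith

lemma wl_nonneg {y : ℝ} (hy : 0 ≤ y) (k : Kind) : 0 ≤ wl y k := pow_nonneg hy _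

lemma wQ_nonneg {y : ℝ} (hy : 0 ≤ y) (k : Kind) : 0 ≤ wQ y k := by
  cases k <;> simp only [wQ] <;> positivity

lemma wE_nonneg {a b : ℝ} (ha : 0 ≤ a) (hb : 0 ≤ b) (k : Kind) : 0 ≤ wE a b k := by
  cases k <;> simp only [wE] <;> positivity

lemma M_eq_one {w : Kind → ℝ} {κ : List Kind} (h : ∀ k ∈ κ, w k = 1) : M w κ = 1 := by
  induction κ with
  | nil => simp [M]
  | cons k κ ih =>
    rw [M_cons, h k (by simp), ih fun k hk => h k (by simp [hk]), one_mul]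

lemma Lin_eq_zero {c : Kind → ℝ} {κ : List Kind} (h : ∀ k ∈ κ, c k = 0) : Lin c κ = 0 := by
  induction κ with
  | nil => simp [Lin]
  | cons k κ ih =>
    rw [Lin_cons, h k (by simp), ih fun k hk => h k (by simp [hk]), zero_add]

lemma cW_nonneg (k : Kind) : 0 ≤ cW k := by cases k <;> simp [cW]

lemma HH_le_one {N x : ℝ} (hN : 0 < N) (hx : 0 ≤ x) : HH N x ≤ 1 := by
  have := CC_pos
  unfold HH
  rw [Real.exp_le_one_iff, neg_nonpos]
  positivity

lemma MV_cases (κ : List Kind) : M wV κ = 0 ∨ (M wV κ = 1 ∧ ∀ k ∈ κ, wV k = 1) := by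
  induction κ with
  | nil => right; simp [M]
  | cons k κ ih =>
    rw [M_cons]
    have hk : wV k = 0 ∨ wV k = 1 := by cases k <;> simp [wV]
    rcases hk with hk | hk
    · left; simp [hk]
    · rcases ih with h | ⟨h, h'⟩
      · left; simp [h]
      · right; simpa [h, hk] using h'

/-- A state of positive potential has no violated constraint and small counting potentials. -/
lemma Phi_pos {N x : ℝ} (hN : 0 < N) (hx : 0 < x) {κ : List Kind} (h : 0 < Phi N x κ) :
    M wV κ = 1 ∧ (∀ k ∈ κ, wV k = 1) ∧ 0 < 1 - KK / N * M (wE (al N x) be) κ ∧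
      B3 N * M (w3 (aa N x)) κ < 1 ∧ BQ N x * M (wQ (yy N x)) κ < 1 ∧
      Bl N x * M (wl (yy N x)) κ < 1 := by
  have hy := one_le_yy hN.le hx
  have ha := one_le_aa hN.le hx
  have hK := KK_pos
  have p1 : 0 ≤ B3 N * M (w3 (aa N x)) κ :=
    mul_nonneg (B3_pos N).le (M_nonneg (w3_nonneg (by linarith)) κ)
  have p2 : 0 ≤ Bl N x * M (wl (yy N x)) κ :=
    mul_nonneg (Bl_pos N x).le (M_nonneg (wl_nonneg (by linarith)) κ)
  have p3 : 0 ≤ BQ N x * M (wQ (yy N x)) κ :=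
    mul_nonneg (BQ_pos N x).le (M_nonneg (wQ_nonneg (by linarith)) κ)
  have p4 : 0 ≤ KK / N * M (wE (al N x) be) κ :=
    mul_nonneg (by positivity) (M_nonneg (wE_nonneg (al_pos N x).le be_pos.le) κ)
  have hH := HH_le_one hN hx.le
  have hH0 := HH_pos N x
  unfold Phi at h
  have hV : 0 < HH N x * (M wV κ - KK / N * M (wE (al N x) be) κ) := by linarith
  have hV' := (mul_pos_iff_of_pos_left hH0).1 hV
  rcases MV_cases κ with h0 | ⟨h1, h2⟩
  · rw [h0] at hV'; linarith
  rw [h1] at hV' h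
  have hle : HH N x * (1 - KK / N * M (wE (al N x) be) κ) ≤ 1 := by nlinarith
  exact ⟨h1, h2, hV', by linarith, by linarith, by linarith⟩

/-- The expectation of the potential after a step, in terms of bounds for the two potentials that
depend on the kind of step. -/
lemma Step_Phi_ge {N x : ℝ} (hN : 10 ^ 9 ≤ N) (hx : N / 10 ≤ x) (β : Bool) (k : Kind)
    (hk : size k ≠ 0) (hV : wV (hit β k) = 1) (κ : List Kind) (hκ : ∀ k ∈ κ, wV k = 1)
    {E Q : ℝ}
    (hE : wE (al N x) be (hit β k) * Step β (1 / (x + 1)) κ (M (wE (al N x) be)) ≤ E)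
    (hQ : BQ N x * (wQ (yy N x) (hit β k) * Step β (1 / (x + 1)) κ (M (wQ (yy N x)))) ≤ Q) :
    HH N x * (1 - 1 / (x + 1) * Lin cW κ - KK / N * E) - B3 N * M (w3 (aa N (x + 1))) (k :: κ) -
      Bl N (x + 1) * M (wl (yy N (x + 1))) (k :: κ) - Q ≤
    Step β (1 / (x + 1)) κ (fun κ' => Phi N x (hit β k :: κ')) := by
  have hN0 : 0 < N := by linarith
  have hx0 : 0 < x := by linarith
  have hK := KK_pos
  have hy := one_le_yy hN0.le hx0
  have hy' := one_le_yy hN0.le (show 0 < x + 1 by linarith)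
  have ha := one_le_aa hN0.le hx0
  have ha' := one_le_aa hN0.le (show 0 < x + 1 by linarith)
  have hq : 0 ≤ 1 / (x + 1) := by positivity
  have hq3 : 3 * (1 / (x + 1)) ≤ 1 := by
    rw [mul_one_div, div_le_one (by linarith)]; linarith
  have e : Step β (1 / (x + 1)) κ (fun κ' => Phi N x (hit β k :: κ')) =
      HH N x * (wV (hit β k) * Step β (1 / (x + 1)) κ (M wV) - KK / N *
        (wE (al N x) be (hit β k) * Step β (1 / (x + 1)) κ (M (wE (al N x) be)))) -
      B3 N * (w3 (aa N x) (hit β k) * Step β (1 / (x + 1)) κ (M (w3 (aa N x)))) -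
      Bl N x * (wl (yy N x) (hit β k) * Step β (1 / (x + 1)) κ (M (wl (yy N x)))) -
      BQ N x * (wQ (yy N x) (hit β k) * Step β (1 / (x + 1)) κ (M (wQ (yy N x)))) := by
    unfold Phi
    simp only [M_cons, Step_sub, Step_mul]
  rw [e, hV, one_mul]
  have v := Step_V_ge β hq hq3 κ hκ
  have s3 : w3 (aa N x) (hit β k) * Step β (1 / (x + 1)) κ (M (w3 (aa N x))) ≤
      M (w3 (aa N (x + 1))) (k :: κ) := by
    have h1 : w3 (aa N x) (hit β k) = 1 := by cases β <;> cases k <;> rfl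
    have h2 : 1 ≤ w3 (aa N (x + 1)) k := by cases k <;> simp only [w3] <;> linarith
    have h3 := Step_3_le β hq3 ha (aa_step hN0.le hx0) κ
    have h4 : 0 ≤ M (w3 (aa N (x + 1))) κ := M_nonneg (w3_nonneg (by linarith)) κ
    rw [h1, one_mul, M_cons]
    nlinarith
  have sl : Bl N x * (wl (yy N x) (hit β k) * Step β (1 / (x + 1)) κ (M (wl (yy N x)))) ≤
      Bl N (x + 1) * M (wl (yy N (x + 1))) (k :: κ) := by
    have h3 := Step_l_le β hq hq3 hy κ
    rw [← yy_step hx0] at h3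
    have h4 : 0 ≤ M (wl (yy N (x + 1))) κ := M_nonneg (wl_nonneg (by linarith)) κ
    have h5 := Bl_step hN hx (j := size k - 1) (by cases k <;> simp [size])
    rw [Nat.sub_add_cancel (Nat.one_le_iff_ne_zero.2 hk), ← size_hit β k] at h5
    have h6 : 0 ≤ Bl N x * yy N x ^ size (hit β k) := by have := Bl_pos N x; positivity
    rw [M_cons]
    unfold wl at h3 h4 ⊢
    calc _ = Bl N x * yy N x ^ size (hit β k) *
          Step β (1 / (x + 1)) κ (M fun k => yy N x ^ size k) := by rw [mul_assoc]
      _ ≤ Bl N x * yy N x ^ size (hit β k) * _ := mul_le_mul_of_nonneg_left h3 h6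
      _ ≤ _ := mul_le_mul_of_nonneg_right h5 h4
      _ = _ := by ring
  have hH := HH_pos N x
  have hB := B3_pos N
  have t1 : HH N x * (1 - 1 / (x + 1) * Lin cW κ - KK / N * E) ≤
      HH N x * (Step β (1 / (x + 1)) κ (M wV) - KK / N *
        (wE (al N x) be (hit β k) * Step β (1 / (x + 1)) κ (M (wE (al N x) be)))) := by
    gcongr
  have t2 := mul_le_mul_of_nonneg_left s3 hB.le
  linarith

lemma BQ_bound {N x : ℝ} (hN : 10 ^ 9 ≤ N) (hx : N / 10 ≤ x) (β : Bool) (k : Kind)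
    (hk : k = e1 ∨ k = z1 ∨ k = z2 ∨ k = e2) (κ : List Kind)
    (hm : (κ.count e3 : ℝ) ≤ 0.54602 * N * ((x + 1) / N) ^ 3) :
    BQ N x * (wQ (yy N x) (hit β k) * Step β (1 / (x + 1)) κ (M (wQ (yy N x)))) ≤
      BQ N (x + 1) * M (wQ (yy N (x + 1))) (k :: κ) := by
  have hN0 : 0 < N := by linarith
  have hx0 : 0 < x := by linarith
  have hy := one_le_yy hN0.le hx0
  have hy' := one_le_yy hN0.le (show 0 < x + 1 by linarith)
  have hq : 0 ≤ 1 / (x + 1) := by positivity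
  have hq3 : 3 * (1 / (x + 1)) ≤ 1 := by
    rw [mul_one_div, div_le_one (by linarith)]; linarith
  have h3 := Step_Q_le β hq hq3 hy κ
  rw [← yy_step hx0] at h3
  have h4 : 0 ≤ M (wQ (yy N (x + 1))) κ := M_nonneg (wQ_nonneg (by linarith)) κ
  have h5 := BQ_step hN hx hm (j := size k - 1) (by
    rcases hk with rfl | rfl | rfl | rfl <;> simp [size])
  rw [Nat.sub_add_cancel (by rcases hk with rfl | rfl | rfl | rfl <;> simp [size]),
    ← size_hit β k] at h5
  have w1 : wQ (yy N x) (hit β k) = yy N x ^ size (hit β k) := by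
    rcases hk with rfl | rfl | rfl | rfl <;> cases β <;> rfl
  have w2 : wQ (yy N (x + 1)) k = yy N (x + 1) ^ size k := by
    rcases hk with rfl | rfl | rfl | rfl <;> rfl
  rw [w1, M_cons, w2]
  have h6 : 0 ≤ BQ N x * yy N x ^ size (hit β k) := by have := BQ_pos N x; positivity
  calc _ = BQ N x * yy N x ^ size (hit β k) * Step β (1 / (x + 1)) κ (M (wQ (yy N x))) := by ring
    _ ≤ BQ N x * yy N x ^ size (hit β k) * _ := mul_le_mul_of_nonneg_left h3 h6
    _ = (BQ N x * yy N x ^ size (hit β k) *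
        Real.exp (3 * (1 / (x + 1)) * (yy N x ^ 2 - 1) * (κ.count e3 : ℝ))) *
        M (wQ (yy N (x + 1))) κ := by ring
    _ ≤ _ := mul_le_mul_of_nonneg_right h5 h4
    _ = _ := by ring

lemma HH_anti {N x : ℝ} (hN : 0 < N) : HH N (x + 1) ≤ HH N x := by
  have := CC_pos
  unfold HH
  rw [Real.exp_le_exp, neg_le_neg_iff]
  gcongr
  linarith

/-- Forced steps: the decrease of the potential of forced variables pays for the probability of a
contradiction. -/
lemma forced {N x : ℝ} (hN : 10 ^ 9 ≤ N) (hx : N / 10 ≤ x) (hxN : x + 1 ≤ N) (β : Bool) (k : Kind)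
    (hk : k = e1 ∨ k = z1 ∨ k = z2) (hV : wV (hit β k) = 1) (κ : List Kind)
    (hpos : 0 < Phi N (x + 1) (k :: κ))
    (hm : (κ.count e3 : ℝ) ≤ 0.54602 * N * ((x + 1) / N) ^ 3)
    (hE : wE (al N x) be (hit β k) * Step β (1 / (x + 1)) κ (M (wE (al N x) be)) ≤
      (1 - et) * M (wE (al N (x + 1)) be) (k :: κ)) :
    Phi N (x + 1) (k :: κ) ≤ Step β (1 / (x + 1)) κ (fun κ' => Phi N x (hit β k :: κ')) := by
  have hN0 : 0 < N := by linarith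
  have hx0 : 0 < x := by linarith
  obtain ⟨g1, g2, g3, -⟩ := Phi_pos hN0 (by linarith) hpos
  have hk0 : size k ≠ 0 := by rcases hk with rfl | rfl | rfl <;> simp [size]
  refine le_trans ?_ (Step_Phi_ge hN hx β k hk0 hV κ (fun k hk => g2 k (by simp [hk])) hE
    (BQ_bound hN hx β k (by tauto) κ hm))
  unfold Phi
  rw [g1]
  set E := M (wE (al N (x + 1)) be) (k :: κ) with hEdef
  have hE0 : 0 ≤ E := M_nonneg (wE_nonneg (al_pos _ _).le be_pos.le) _
  have c1 : th / 10 ^ 4 * Lin cW κ ≤ E := by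
    refine le_trans ?_ (Lin_cW_le hN0 hxN (k :: κ))
    rw [Lin_cons]
    have := cW_nonneg k
    have := th_pos
    gcongr; linarith
  have hc0 := Lin_nonneg κ cW_nonneg
  have c2 : 1 / (x + 1) * Lin cW κ ≤ KK / N * (et * E) := by
    have hth : 0 < th / 10 ^ 4 := by have := th_pos; positivity
    have hK : KK * et = 10 / (th / 10 ^ 4) := by
      unfold KK; have := et_pos; field_simp
    have hL : Lin cW κ ≤ E / (th / 10 ^ 4) := by rw [le_div_iff₀ hth]; linarith
    have hq : 1 / (x + 1) ≤ 10 / N := by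
      rw [div_le_div_iff₀ (by linarith) hN0]; linarith
    calc 1 / (x + 1) * Lin cW κ ≤ 10 / N * (E / (th / 10 ^ 4)) := by gcongr
      _ = (10 / (th / 10 ^ 4)) / N * E := by ring
      _ = (KK * et) / N * E := by rw [hK]
      _ = _ := by ring
  have c3 : HH N (x + 1) * (1 - KK / N * E) ≤
      HH N x * (1 - 1 / (x + 1) * Lin cW κ - KK / N * ((1 - et) * E)) := by
    refine mul_le_mul (HH_anti hN0) ?_ g3.le (HH_pos _ _).le
    linarith
  linarith

/-- Free steps: they are paid for by the growth of `HH` as variables are used up, which also covers a tiny increase of the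
potential of the occurrences outside `e3` constraints. -/
lemma free {N x : ℝ} (hN : 10 ^ 9 ≤ N) (hNC : CC / N ≤ 1 / 2) (hx : N / 10 ≤ x) (hxN : x + 1 ≤ N)
    (β : Bool) (k : Kind) (hk : size k ≠ 0) (hV : wV (hit β k) = 1) (κ : List Kind)
    (hpos : 0 < Phi N (x + 1) (k :: κ)) (hW : ∀ k ∈ κ, cW k = 0)
    (hQ : BQ N x * (wQ (yy N x) (hit β k) * Step β (1 / (x + 1)) κ (M (wQ (yy N x)))) ≤
      BQ N (x + 1) * M (wQ (yy N (x + 1))) (k :: κ) + Real.exp (-CC) / N)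
    (hE : wE (al N x) be (hit β k) * Step β (1 / (x + 1)) κ (M (wE (al N x) be)) ≤ 2) :
    Phi N (x + 1) (k :: κ) ≤ Step β (1 / (x + 1)) κ (fun κ' => Phi N x (hit β k :: κ')) := by
  have hN0 : 0 < N := by linarith
  have hx0 : 0 < x := by linarith
  obtain ⟨g1, g2, g3, -⟩ := Phi_pos hN0 (by linarith) hpos
  refine le_trans ?_ (Step_Phi_ge hN hx β k hk hV κ (fun k hk => g2 k (by simp [hk])) hE hQ)
  unfold Phi
  rw [g1, Lin_eq_zero hW, mul_zero, sub_zero]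
  set E := M (wE (al N (x + 1)) be) (k :: κ) with hEdef
  have hE0 : 0 ≤ E := M_nonneg (wE_nonneg (al_pos _ _).le be_pos.le) _
  have hK := KK_pos
  have hC := CC_pos
  have h1 : HH N (x + 1) ≤ HH N x * (1 - (2 * KK + 1) / N) := by
    have e : HH N (x + 1) = HH N x * Real.exp (-(CC / N)) := by
      unfold HH; rw [← Real.exp_add]; congr 1; ring
    rw [e]
    have := exp_neg_le (x := CC / N) (by positivity) hNC
    have e2 : 1 - CC / N / 2 = 1 - (2 * KK + 1) / N := by unfold CC; ring
    rw [e2] at this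
    have := HH_pos N x
    gcongr
  have h2 : Real.exp (-CC) ≤ HH N x := by
    unfold HH
    rw [Real.exp_le_exp, neg_le_neg_iff]
    have : x / N ≤ 1 := by rw [div_le_one hN0]; linarith
    nlinarith
  have h3 : Real.exp (-CC) / N ≤ HH N x / N := by gcongr
  have h4 : HH N (x + 1) * (1 - KK / N * E) ≤ HH N (x + 1) := by
    have : 0 ≤ KK / N * E := by positivity
    nlinarith [HH_pos N (x + 1)]
  have h5 : HH N x * (1 - (2 * KK + 1) / N) = HH N x * (1 - KK / N * 2) - HH N x / N := by ring
  linarith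

/-! ### The induction over the variables -/

/-- Sufficient largeness conditions on the number of variables. -/
structure Large (N : ℝ) : Prop where
  big : 10 ^ 9 ≤ N
  cost : CC / N ≤ 1 / 2
  tiny : 6 * Real.exp (-(zz * N * (1 / 10 ^ 5))) ≤ Real.exp (-CC) / N

lemma count_tail_le (k k0 : Kind) (κ : List Kind) :
    (κ.count k0 : ℝ) ≤ ((k :: κ).count k0 : ℕ) := by
  exact_mod_cast List.count_le_count_cons

/-- The potential does not decrease on average in a suitable step: the variable of an `e1`
constraint is set to true, else any variable of a `z1` or `z2` constraint is set to false, else a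
variable of an `e2` or `e3` constraint is set to true. -/
lemma Phi_le_Step {N x : ℝ} (hL : Large N) (hx : N / 10 ≤ x) (hxN : x + 1 ≤ N) (κ : List Kind)
    (hpos : 0 < Phi N (x + 1) κ) :
    (∀ k ∈ κ, k = ok) ∨ ∃ (β : Bool) (k : Kind) (κ' : List Kind), size k ≠ 0 ∧ κ.Perm (k :: κ') ∧
      Phi N (x + 1) (k :: κ') ≤
        Step β (1 / (x + 1)) κ' (fun κ'' => Phi N x (hit β k :: κ'')) := by
  obtain ⟨hN, hNC, htiny⟩ := hL
  have hN0 : 0 < N := by linarith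
  have hx0 : 0 < x := by linarith
  have hx' : N / 10 ≤ x + 1 := by linarith
  have hs1 : (x + 1) / N ≤ 1 := by rw [div_le_one hN0]; exact hxN
  have hs0 : 0 ≤ x / N := by positivity
  have hq : 0 ≤ 1 / (x + 1) := by positivity
  have hq3 : 3 * (1 / (x + 1)) ≤ 1 := by
    rw [mul_one_div, div_le_one (by linarith)]; linarith
  have hth := th_pos
  have hα : 1 ≤ al N x := by
    apply Real.one_le_exp
    have := A_ge (show x / N ≤ 1 by rw [div_le_one hN0]; linarith)
    have : 0 ≤ A (x / N) := by linarith [show (0 : ℝ) ≤ 1 / 10 ^ 4 by norm_num]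
    positivity
  have hα' : al N x ≤ al N (x + 1) := by
    unfold al
    rw [Real.exp_le_exp]
    have := A_mono hs0 (show x / N ≤ (x + 1) / N by gcongr; linarith)
    gcongr
  have hb := one_le_be
  have hA5 : A ((x + 1) / N) ≤ 5 := A_le (by positivity) hs1
  have hPhi : ∀ {κ'}, κ.Perm κ' → 0 < Phi N (x + 1) κ' := by
    intro κ' h
    unfold Phi at hpos ⊢
    simpa only [M_perm h] using hpos
  -- the bounds on the numbers of constraints that remain when one is singled out
  have hcount : ∀ {k κ'}, κ.Perm (k :: κ') →
      (κ'.count e3 : ℝ) ≤ 0.54602 * N * ((x + 1) / N) ^ 3 ∧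
      2 * (κ'.count e2 : ℝ) ≤ N * D ((x + 1) / N) * ((x + 1) / N + zz) := by
    intro k κ' h
    obtain ⟨-, -, -, g4, g5, -⟩ := Phi_pos hN0 (by linarith) (hPhi h)
    have a := count_e3_le hN0 hx' g4
    have b := count_e2_le hN0 hx' g5
    have c := count_tail_le k e3 κ'
    have d := count_tail_le k e2 κ'
    exact ⟨c.trans a, by linarith⟩
  have hT : ∀ {k κ'}, κ.Perm (k :: κ') →
      Step true (1 / (x + 1)) κ' (M (wE (al N x) be)) ≤ M (wE (al N (x + 1)) be) κ' *
        Real.exp (th * (A ((x + 1) / N) - 1 / (2 * 10 ^ 4))) := by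
    intro k κ' h
    refine (Step_E_true hq hq3 hα hα' hb κ').trans ?_
    have := expo_true hN0 hx' hxN (hcount h).1 (hcount h).2
    have := M_nonneg (wE_nonneg (al_pos N (x + 1)).le be_pos.le) κ'
    gcongr
  have hF : ∀ {k κ'}, κ.Perm (k :: κ') →
      Step false (1 / (x + 1)) κ' (M (wE (al N x) be)) ≤ M (wE (al N (x + 1)) be) κ' *
        ((1 - et) * be) := by
    intro k κ' h
    refine (Step_E_false hq hq3 hα hα' hb κ').trans ?_
    have h1 := expo_false hN0 hx' hxN (Nat.cast_nonneg _) hα' (hcount h).2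
    have h2 := exp_decay 1
    rw [mul_one] at h2
    have := M_nonneg (wE_nonneg (al_pos N (x + 1)).le be_pos.le) κ'
    exact mul_le_mul_of_nonneg_left ((Real.exp_le_exp.2 h1).trans h2) this
  by_cases h1 : e1 ∈ κ
  · right
    have hp := List.perm_cons_erase h1
    refine ⟨true, e1, κ.erase e1, by simp [size], hp, ?_⟩
    refine forced hN hx hxN true e1 (by simp) rfl _ (hPhi hp) (hcount hp).1 ?_
    have h0 := M_nonneg (wE_nonneg (al_pos N (x + 1)).le be_pos.le) (κ.erase e1)
    calc _ ≤ M (wE (al N (x + 1)) be) (κ.erase e1) *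
          Real.exp (th * (A ((x + 1) / N) - 1 / (2 * 10 ^ 4))) := by
          rw [show wE (al N x) be (hit true e1) = 1 from rfl, one_mul]; exact hT hp
      _ ≤ M (wE (al N (x + 1)) be) (κ.erase e1) * ((1 - et) * al N (x + 1)) :=
          mul_le_mul_of_nonneg_left (exp_decay _) h0
      _ = _ := by rw [M_cons, show wE (al N (x + 1)) be e1 = al N (x + 1) from rfl]; ring
  by_cases h2 : z1 ∈ κ
  · right
    have hp := List.perm_cons_erase h2
    refine ⟨false, z1, κ.erase z1, by simp [size], hp, ?_⟩
    refine forced hN hx hxN false z1 (by simp) rfl _ (hPhi hp) (hcount hp).1 ?_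
    rw [show wE (al N x) be (hit false z1) = 1 from rfl, one_mul, M_cons,
      show wE (al N (x + 1)) be z1 = be from rfl]
    exact (hF hp).trans (le_of_eq (by ring))
  by_cases h3 : z2 ∈ κ
  · right
    have hp := List.perm_cons_erase h3
    refine ⟨false, z2, κ.erase z2, by simp [size], hp, ?_⟩
    refine forced hN hx hxN false z2 (by simp) rfl _ (hPhi hp) (hcount hp).1 ?_
    rw [show wE (al N x) be (hit false z2) = be from rfl, M_cons,
      show wE (al N (x + 1)) be z2 = be ^ 2 from rfl]
    exact (mul_le_mul_of_nonneg_left (hF hp) be_pos.le).trans (le_of_eq (by ring))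
  have hW : ∀ k ∈ κ, cW k = 0 := by
    intro k hk
    cases k <;> simp only [cW] <;> contradiction
  have hw1 : ∀ k ∈ κ, wE (al N (x + 1)) be k = 1 := by
    intro k hk
    cases k <;> simp only [wE] <;> contradiction
  have hexp : Real.exp (th * (A ((x + 1) / N) - 1 / (2 * 10 ^ 4))) ≤ Real.exp (th * 5) := by
    rw [Real.exp_le_exp]
    have : (0 : ℝ) ≤ 1 / (2 * 10 ^ 4) := by norm_num
    gcongr; linarith
  have h7 : Real.exp (th * 7) ≤ 2 := by
    have := exp_le_quad (x := th * 7) (by unfold th; rw [abs_of_pos] <;> norm_num)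
    unfold th at *
    linarith
  have hbe2 : be ^ 2 * Real.exp (th * 5) ≤ 2 := by
    refine le_trans (le_of_eq ?_) h7
    rw [be, sq, ← Real.exp_add, ← Real.exp_add]; congr 1; ring
  have hbe1 : be * Real.exp (th * 5) ≤ 2 := by
    refine le_trans ?_ hbe2
    have := Real.exp_pos (th * 5)
    gcongr
    nlinarith
  by_cases h4 : e2 ∈ κ
  · right
    have hp := List.perm_cons_erase h4
    refine ⟨true, e2, κ.erase e2, by simp [size], hp, ?_⟩
    have hsub : ∀ k ∈ κ.erase e2, k ∈ κ := fun k hk => List.mem_of_mem_erase hk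
    refine free hN hNC hx hxN true e2 (by simp [size]) rfl _ (hPhi hp)
      (fun k hk => hW k (hsub k hk)) ?_ ?_
    · refine (BQ_bound hN hx true e2 (by simp) _ (hcount hp).1).trans ?_
      have : 0 ≤ Real.exp (-CC) / N := by positivity
      linarith
    · have := hT hp
      rw [M_eq_one (fun k hk => hw1 k (hsub k hk)), one_mul] at this
      rw [show wE (al N x) be (hit true e2) = be from rfl]
      exact (mul_le_mul_of_nonneg_left (this.trans hexp) be_pos.le).trans hbe1
  by_cases h5 : e3 ∈ κ
  · right
    have hp := List.perm_cons_erase h5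
    refine ⟨true, e3, κ.erase e3, by simp [size], hp, ?_⟩
    have hsub : ∀ k ∈ κ.erase e3, k ∈ κ := fun k hk => List.mem_of_mem_erase hk
    obtain ⟨-, g2, -⟩ := Phi_pos hN0 (by linarith) hpos
    refine free hN hNC hx hxN true e3 (by simp [size]) rfl _ (hPhi hp)
      (fun k hk => hW k (hsub k hk)) ?_ ?_
    · have hy := one_le_yy hN0.le hx0
      have hy' := one_le_yy hN0.le (show 0 < x + 1 by linarith)
      have hQ := Step_Q_le true hq hq3 hy (κ.erase e3)
      rw [M_eq_one, one_mul] at hQ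
      swap
      · intro k hk
        have hk' := hsub k hk
        have hg := g2 k hk'
        cases k <;> simp only [wQ, size, pow_zero, wV] at hg ⊢ <;>
          first | contradiction | (norm_num at hg)
      have hnn : 0 ≤ BQ N (x + 1) * M (wQ (yy N (x + 1))) (e3 :: κ.erase e3) :=
        mul_nonneg (BQ_pos _ _).le (M_nonneg (wQ_nonneg (by linarith)) _)
      refine le_trans ?_ (le_add_of_nonneg_left hnn)
      refine le_trans ?_ htiny
      have hy2 : yy N x ≤ 1 + 1 / 10 ^ 8 := by
        have : N / x ≤ 10 := by rw [div_le_iff₀ hx0]; linarith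
        unfold yy zz; linarith
      have hy3 : yy N x ^ 2 ≤ 1 + 1 / 10 ^ 7 := by nlinarith
      have hexpo : 3 * (1 / (x + 1)) * (yy N x ^ 2 - 1) * ((κ.erase e3).count e3 : ℝ) ≤ 1 := by
        have c1 := (hcount hp).1
        have c2 : 1 / (x + 1) * ((κ.erase e3).count e3 : ℝ) ≤ 1 := by
          rw [one_div_mul_eq_div, div_le_one (by linarith)]
          refine c1.trans ?_
          have e : 0.54602 * N * ((x + 1) / N) ^ 3 = 0.54602 * ((x + 1) / N) ^ 2 * (x + 1) := by
            field_simp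
          rw [e]
          have : ((x + 1) / N) ^ 2 ≤ 1 := pow_le_one₀ (by positivity) hs1
          nlinarith
        have c3 : 0 ≤ yy N x ^ 2 - 1 := by nlinarith
        have c4 := mul_le_mul_of_nonneg_right c2 c3
        nlinarith
      have hQ3 : Step true (1 / (x + 1)) (κ.erase e3) (M (wQ (yy N x))) ≤ 2.7182818286 :=
        hQ.trans ((Real.exp_le_exp.2 hexpo).trans Real.exp_one_lt_d9.le)
      have hwq : wQ (yy N x) (hit true e3) = yy N x ^ 2 := rfl
      have hBQ : BQ N x ≤ Real.exp (-(zz * N * (1 / 10 ^ 5))) := by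
        unfold BQ
        rw [Real.exp_le_exp, neg_le_neg_iff]
        have := zz_pos
        have := D_ge (show x / N ≤ 1 by rw [div_le_one hN0]; linarith)
        gcongr
      have hprod : yy N x ^ 2 * Step true (1 / (x + 1)) (κ.erase e3) (M (wQ (yy N x))) ≤ 6 := by
        have := mul_le_mul_of_nonneg_left hQ3 (sq_nonneg (yy N x))
        nlinarith
      rw [hwq]
      have := mul_le_mul_of_nonneg_left hprod (BQ_pos N x).le
      linarith
    · have := hT hp
      rw [M_eq_one (fun k hk => hw1 k (hsub k hk)), one_mul] at this
      rw [show wE (al N x) be (hit true e3) = be ^ 2 from rfl]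
      exact (mul_le_mul_of_nonneg_left (this.trans hexp) (sq_nonneg _)).trans hbe2
  left
  obtain ⟨-, g2, -⟩ := Phi_pos hN0 (by linarith) hpos
  intro k hk
  have hg := g2 k hk
  cases k <;> first | rfl | contradiction | (norm_num [wV] at hg)

/-- With at most an eighth of the variables left the potential is never positive, since the
normalized potential of variable occurrences is at least `1`. -/
lemma Phi_base {N x : ℝ} (hN : 0 < N) (hx : 0 < x) (hx8 : x ≤ N / 8) (κ : List Kind) :
    Phi N x κ ≤ 0 := by
  by_contra h
  push Not at h
  obtain ⟨-, -, -, -, -, g⟩ := Phi_pos hN hx h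
  have h1 : 1 ≤ Bl N x := by
    apply Real.one_le_exp
    have hl : Real.log (x / N) ≤ -(3 * Real.log 2) := by
      have : x / N ≤ 1 / 8 := by rw [div_le_iff₀ hN]; linarith
      have h2 := Real.log_le_log (by positivity) this
      have h3 : Real.log (1 / 8) = -(3 * Real.log 2) := by
        rw [show (1 / 8 : ℝ) = (2 ^ 3)⁻¹ by norm_num, Real.log_inv, Real.log_pow]; norm_num
      linarith
    have hlog := Real.log_two_gt_d9
    have hz := zz_pos
    have : 3 * 0.5461 + 0.8 * Real.log (x / N) ≤ 0 := by linarith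
    have h0 : 0 ≤ zz * N := by positivity
    nlinarith
  have h2 : 1 ≤ M (wl (yy N x)) κ := by
    have := exp_Lin_le_M (w := wl (yy N x)) (c := fun _ => 0) κ (fun k => by
      rw [Real.exp_zero]; exact one_le_pow₀ (one_le_yy hN.le hx))
    rw [Lin_eq_zero (fun _ _ => rfl), Real.exp_zero] at this
    exact this
  nlinarith

/-- The potential bounds the satisfiability probability from below, since the latter is a
supermartingale-like quantity under every step (`step_cons_le_PP`) and the former is a
submartingale under the steps chosen in `Phi_le_Step`. -/
lemma Phi_le_PP {N : ℕ} (hL : Large N) (n : ℕ) (hn : (N : ℝ) / 10 ≤ n) (hnN : n ≤ N)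
    (κ : List Kind) : Phi N n κ ≤ PP n κ (fun _ => True) := by
  have hN := hL.big
  have hN0 : (0 : ℝ) < N := by linarith
  obtain ⟨n0, hn0⟩ : ∃ n0, n0 = ⌈(N : ℝ) / 10⌉₊ := ⟨_, rfl⟩
  have hlow : (N : ℝ) / 10 ≤ n0 := by rw [hn0]; exact Nat.le_ceil _
  have hn0n : n0 ≤ n := by rw [hn0]; exact Nat.ceil_le.2 hn
  induction n, hn0n using Nat.le_induction generalizing κ with
  | base =>
    have : (n0 : ℝ) < N / 10 + 1 := by rw [hn0]; exact Nat.ceil_lt_add_one (by positivity)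
    exact (Phi_base hN0 (by linarith) (by linarith) κ).trans (PP_nonneg κ _)
  | succ n hle ih =>
    have hn' : (N : ℝ) / 10 ≤ n := hlow.trans (by exact_mod_cast hle)
    have hnN' : (n : ℝ) + 1 ≤ N := by exact_mod_cast hnN
    rcases le_or_gt (Phi N ((n + 1 : ℕ) : ℝ) κ) 0 with h | h
    · exact h.trans (PP_nonneg κ _)
    push_cast at h ⊢
    rcases Phi_le_Step hL hn' hnN' κ h with hok | ⟨β, k, κ', hk, hp, hs⟩
    · rw [PP_ok κ hok]
      obtain ⟨g1, -, g3, -⟩ := Phi_pos hN0 (by linarith) h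
      have hx0 : (0 : ℝ) < n + 1 := by positivity
      have hy := one_le_yy hN0.le hx0
      have ha := one_le_aa hN0.le hx0
      have p1 := mul_nonneg (B3_pos N).le (M_nonneg (w3_nonneg (show 0 ≤ aa N (n + 1) by linarith)) κ)
      have p2 := mul_nonneg (Bl_pos N (n + 1)).le
        (M_nonneg (wl_nonneg (show 0 ≤ yy N (n + 1) by linarith)) κ)
      have p3 := mul_nonneg (BQ_pos N (n + 1)).le
        (M_nonneg (wQ_nonneg (show 0 ≤ yy N (n + 1) by linarith)) κ)
      have p4 : 0 ≤ KK / N * M (wE (al N (n + 1)) be) κ :=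
        mul_nonneg (by have := KK_pos; positivity)
          (M_nonneg (wE_nonneg (al_pos N (n + 1)).le be_pos.le) κ)
      have hH := HH_le_one hN0 hx0.le
      have hH0 := HH_pos N (n + 1)
      unfold Phi
      rw [g1]
      nlinarith
    · have hn3 : 3 ≤ n := by
        have : (3 : ℝ) ≤ n := by linarith
        exact_mod_cast this
      rw [PP_perm hp, show Phi N (n + 1) κ = Phi N (n + 1) (k :: κ') by
        unfold Phi; simp only [M_perm hp]]
      refine hs.trans (le_trans ?_ (step_cons_le_PP hn3 β k hk κ'))
      refine Step_mono (by positivity) ?_ κ' fun κ'' => ih hn' (by omega) _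
      rw [mul_one_div, div_le_one (by positivity)]
      linarith

/-! ### The initial formula -/

lemma eventually_large : ∀ᶠ N : ℕ in atTop, Large (N : ℝ) := by
  have hz := zz_pos
  have h1 : ∀ᶠ N : ℝ in atTop, 10 ^ 9 ≤ N := eventually_ge_atTop _
  have h2 : ∀ᶠ N : ℝ in atTop, CC / N ≤ 1 / 2 :=
    (tendsto_const_nhds.div_atTop tendsto_id).eventually_le_const (by norm_num)
  have h3 : Tendsto (fun N : ℝ => N ^ (1 : ℝ) * Real.exp (-(zz / 10 ^ 5) * N)) atTop (𝓝 0) :=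
    tendsto_rpow_mul_exp_neg_mul_atTop_nhds_zero 1 _ (by positivity)
  have h4 : ∀ᶠ N : ℝ in atTop, N ^ (1 : ℝ) * Real.exp (-(zz / 10 ^ 5) * N) ≤
      Real.exp (-CC) / 6 := h3.eventually_le_const (by positivity)
  refine tendsto_natCast_atTop_atTop.eventually ?_
  filter_upwards [h1, h2, h4] with N a b c
  refine ⟨a, b, ?_⟩
  have hN : 0 < N := by linarith
  rw [Real.rpow_one] at c
  rw [le_div_iff₀ hN, show -(zz * N * (1 / 10 ^ 5)) = -(zz / 10 ^ 5) * N by ring]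
  linarith

/-- Initially all correction terms of the potential are negligible, since the clause density
is at most `0.546`. -/
lemma Phi_start {N : ℕ} (hL : Large N) {m : ℕ} (hm : (m : ℝ) ≤ 0.546 * N) :
    Real.exp (-CC) / 2 ≤ Phi N N (List.replicate m e3) := by
  obtain ⟨hN, hNC, htiny⟩ := hL
  have hN0 : (0 : ℝ) < N := by linarith
  have hz := zz_pos
  have hzN : 0 < zz * N := by positivity
  have hzm : zz * m ≤ zz * N * 0.546 := by nlinarith
  have hone : ∀ {w : Kind → ℝ}, w e3 = 1 → M w (List.replicate m e3) = 1 := fun h =>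
    M_eq_one fun k hk => by rw [List.eq_of_mem_replicate hk, h]
  have hdiv : (N : ℝ) / N = 1 := div_self hN0.ne'
  set ε := Real.exp (-(zz * N * (1 / 10 ^ 5))) with hε
  have hpow : ∀ j : ℕ, (1 + zz) ^ j ≤ Real.exp (zz * j) := fun j => by
    rw [mul_comm, Real.exp_nat_mul]
    have := Real.add_one_le_exp zz
    gcongr
    linarith
  have t3 : B3 N * M (w3 (aa N N)) (List.replicate m e3) ≤ ε := by
    rw [M_w3, List.count_replicate_self, aa, hdiv, one_pow, mul_one, B3]
    refine (mul_le_mul_of_nonneg_left (hpow m) (Real.exp_pos _).le).trans ?_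
    rw [← Real.exp_add, hε, Real.exp_le_exp]
    linarith
  have tl : Bl N N * M (wl (yy N N)) (List.replicate m e3) ≤ ε := by
    have hM : M (wl (yy N N)) (List.replicate m e3) = (1 + zz) ^ (3 * m) := by
      simp [M, wl, yy, hdiv, size, pow_mul]
    rw [hM, Bl, hdiv, Real.log_one]
    refine (mul_le_mul_of_nonneg_left (hpow (3 * m)) (Real.exp_pos _).le).trans ?_
    rw [← Real.exp_add, hε, Real.exp_le_exp]
    push_cast
    linarith
  have tQ : BQ N N * M (wQ (yy N N)) (List.replicate m e3) = ε := by
    rw [hone rfl, mul_one, BQ, hdiv, hε]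
    have : D 1 = 1 / 10 ^ 5 := by
      unfold D; rw [max_eq_left (by norm_num)]; norm_num
    rw [this]
  have hH : HH N N = Real.exp (-CC) := by rw [HH, hdiv, mul_one]
  have hKK : KK / N ≤ 1 / 8 := by
    rw [div_le_iff₀ hN0] at hNC ⊢
    unfold CC at hNC
    linarith
  have hsmall : Real.exp (-CC) / N ≤ Real.exp (-CC) / 2 := by
    gcongr
    linarith
  unfold Phi
  rw [hone (w := wV) rfl, hone (w := wE _ _) rfl, hH, tQ]
  have hC := Real.exp_pos (-CC)
  have := mul_le_mul_of_nonneg_left hKK hC.le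
  linarith

lemma Psat_lower : ∀ᶠ N : ℕ in atTop, Real.exp (-CC) / 2 ≤ Psat N ⌊0.546 * (N : ℝ)⌋₊ := by
  filter_upwards [eventually_large] with N hL
  have hN : (0 : ℝ) ≤ N := Nat.cast_nonneg N
  rw [← PP_replicate]
  exact (Phi_start hL (Nat.floor_le (by positivity))).trans
    (Phi_le_PP hL N (by linarith) le_rfl _)

end EC3

/-- If a uniform satisfiability threshold `r*` exists for random EC3 formulas,
then `r* ≥ 0.546`. -/
theorem ec3_threshold_lower_bound (rstar : ℝ) (hpos : 0 < rstar)
    (hbelow : ∀ r : ℝ, r < rstar →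
      Tendsto (fun n : ℕ => Psat n ⌊r * (n : ℝ)⌋₊) atTop (𝓝 1))
    (habove : ∀ r : ℝ, rstar < r →
      Tendsto (fun n : ℕ => Psat n ⌊r * (n : ℝ)⌋₊) atTop (𝓝 0)) :
    0.546 ≤ rstar := by
  by_contra hlt
  have hlim := habove 0.546 (not_le.1 hlt)
  have hbound := ge_of_tendsto hlim EC3.Psat_lower
  have hexp := Real.exp_pos (-EC3.CC)
  linarith
end
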